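/- arXiv:2402.14113 — 6 statements merged into one kernel-verified Lean document; each statement's English description precedes it below -/
import Mathlib

section
/- For every integer k ≥ 7 there exists n₀ such that for every n ≥ n₀ there is a saturated k-Sperner system F ⊆ P([n]) with |F| ≤ 2^{(1-ε)k}, where ε = 1 - (log₂ 28)/5 (equivalently, |F| ≤ 28^{k/5}). -/
open Finset

/-- A family contains a chain of `m` sets `C 0 ⊊ C 1 ⊊ ⋯ ⊊ C (m-1)`. -/
def HasChainOfLen {α : Type*} [DecidableEq α] (F : Finset (Finset α)) (m : ℕ) : Prop :=
  ∃ C : Fin m → Finset α, StrictMono C ∧ ∀ i, C i ∈ F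

/-- `F ⊆ P(X)` is a saturated `k`-Sperner system: it has no chain of `k+1` sets,
and adding any `S ⊆ X` with `S ∉ F` creates a chain of `k+1` sets. -/
def IsSatKSperner {α : Type*} [DecidableEq α] (X : Finset α) (F : Finset (Finset α))
    (k : ℕ) : Prop :=
  (∀ A ∈ F, A ⊆ X) ∧ ¬ HasChainOfLen F (k + 1) ∧
    ∀ S ⊆ X, S ∉ F → HasChainOfLen (insert S F) (k + 1)

/-- `H` is a homogeneous atom for `F` in `P(X)`: `H ⊆ X` is maximal with the property
that every member of `F` contains all of `H` or none of it, and `|H| ≥ 2`. -/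
def IsHomogAtom {α : Type*} [DecidableEq α] (X : Finset α) (F : Finset (Finset α))
    (H : Finset α) : Prop :=
  H ⊆ X ∧ (∀ S ∈ F, S ∩ H = ∅ ∨ S ∩ H = H) ∧
    (∀ B ⊆ X, (∀ S ∈ F, S ∩ B = ∅ ∨ S ∩ B = B) → H ⊆ B → H = B) ∧
    2 ≤ H.card

/-- The small members of `F` (those disjoint from the homogeneous atom `H`). -/
def smallSets {α : Type*} [DecidableEq α] (F : Finset (Finset α)) (H : Finset α) :
    Finset (Finset α) :=
  F.filter fun S => S ∩ H = ∅

/-- The large members of `F` (those containing the homogeneous atom `H`). -/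
def largeSets {α : Type*} [DecidableEq α] (F : Finset (Finset α)) (H : Finset α) :
    Finset (Finset α) :=
  F.filter fun S => H ⊆ S

/-- The minimal elements (under inclusion) of a family of sets. -/
def minimalsIn {α : Type*} [DecidableEq α] (G : Finset (Finset α)) : Finset (Finset α) :=
  G.filter fun A => ∀ B ∈ G, B ⊆ A → B = A

/-- What remains of `F` after stripping off minimal elements `i` times. -/
def canonRest {α : Type*} [DecidableEq α] (F : Finset (Finset α)) : ℕ → Finset (Finset α)
  | 0 => F
  | i + 1 => canonRest F i \ minimalsIn (canonRest F i)

/-- The canonical decomposition of `F` into antichains: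
`canonDecomp F i` is the family of minimal elements of `F \ ⋃_{j<i} canonDecomp F j`. -/
def canonDecomp {α : Type*} [DecidableEq α] (F : Finset (Finset α)) (i : ℕ) :
    Finset (Finset α) :=
  minimalsIn (canonRest F i)

/-- A sequence `(D i)_{i=0}^t` of families is layered if for `1 ≤ i ≤ t`,
every member of `D i` strictly contains some member of `D (i-1)`. -/
def Layered {α : Type*} [DecidableEq α] (D : ℕ → Finset (Finset α)) (t : ℕ) : Prop :=
  ∀ i, 1 ≤ i → i ≤ t → ∀ A ∈ D i, ∃ B ∈ D (i - 1), B ⊂ A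

/-- `S` is lower critical for `r`: removing any element lowers the rank. -/
def LowCrit {α : Type} [DecidableEq α] (r : Finset α → ℕ) (S : Finset α) : Prop :=
  ∀ x ∈ S, r (S.erase x) < r S

/-- `S` is upper critical for `r`: adding any element raises the rank. -/
def UpCrit {α : Type} [DecidableEq α] (r : Finset α → ℕ) (S : Finset α) : Prop :=
  ∀ x, x ∉ S → r S < r (insert x S)

instance {α : Type} [DecidableEq α] (r : Finset α → ℕ) (S : Finset α) :
    Decidable (LowCrit r S) := by unfold LowCrit; infer_instance

instance {α : Type} [Fintype α] [DecidableEq α] (r : Finset α → ℕ) (S : Finset α) :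
    Decidable (UpCrit r S) := by unfold UpCrit; infer_instance

/-- A rank function of height `K` with at most `a` critical sets of either kind. -/
structure Good (α : Type) [Fintype α] [DecidableEq α] (r : Finset α → ℕ) (K a : ℕ) : Prop where
  mono : Monotone r
  bot : r ∅ = 0
  top : r univ = K
  down : ∀ S : Finset α, S.Nonempty → ∃ x ∈ S, r S ≤ r (S.erase x) + 1
  up : ∀ S : Finset α, S ≠ univ → ∃ x, x ∉ S ∧ r (insert x S) ≤ r S + 1
  lo : (univ.filter fun S : Finset α => LowCrit r S).card ≤ a
  hi : (univ.filter fun S : Finset α => UpCrit r S).card ≤ a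

/-- Existence of a good rank function. -/
def ExGood (K a : ℕ) : Prop :=
  ∃ (α : Type) (_ : Fintype α) (_ : DecidableEq α) (r : Finset α → ℕ), Good α r K a

theorem exGood_zero : ExGood 0 1 := by
  refine ⟨Fin 0, inferInstance, inferInstance, fun S => S.card, ?_⟩
  refine ⟨fun _ _ h => card_le_card h, by decide, by decide, by decide, by decide, by decide,
    by decide⟩

theorem exGood_one : ExGood 1 2 := by
  refine ⟨Fin 1, inferInstance, inferInstance, fun S => S.card, ?_⟩
  refine ⟨fun _ _ h => card_le_card h, by decide, by decide, by decide, by decide, by decide,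
    by decide⟩

/-- The rank function on a seven element set found by computer search. -/
def rank7 (S : Finset (Fin 7)) : ℕ :=
  (28056318421812314322210287175298468366844047243843261736056657223786915322708035417497467996900101890934473570685504 / 8 ^ (∑ i ∈ S, 2 ^ (i : ℕ))) % 8

theorem mono_of_insert {α : Type} [DecidableEq α] (r : Finset α → ℕ)
    (h : ∀ S x, r S ≤ r (insert x S)) : Monotone r := by
  intro S T hST
  rw [← Finset.union_eq_right.2 hST]
  clear hST
  induction T using Finset.induction_on with
  | empty => simp
  | insert a T _ ih => rw [Finset.union_insert]; exact ih.trans (h _ _)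

theorem exGood_five : ExGood 5 28 := by
  refine ⟨Fin 7, inferInstance, inferInstance, rank7, ?_⟩
  refine ⟨mono_of_insert _ ?_, ?_, ?_, ?_, ?_, ?_, ?_⟩
  all_goals decide +kernel

theorem toLeft_erase_inl {α β : Type} [DecidableEq α] [DecidableEq β] (S : Finset (α ⊕ β)) (x : α) :
    (S.erase (Sum.inl x)).toLeft = S.toLeft.erase x ∧
      (S.erase (Sum.inl x)).toRight = S.toRight := by
  constructor <;> ext y <;> simp

theorem toLeft_erase_inr {α β : Type} [DecidableEq α] [DecidableEq β] (S : Finset (α ⊕ β)) (x : β) :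
    (S.erase (Sum.inr x)).toLeft = S.toLeft ∧
      (S.erase (Sum.inr x)).toRight = S.toRight.erase x := by
  constructor <;> ext y <;> simp

theorem toLeft_ins_inl {α β : Type} [DecidableEq α] [DecidableEq β] (S : Finset (α ⊕ β)) (x : α) :
    (insert (Sum.inl x) S).toLeft = insert x S.toLeft ∧
      (insert (Sum.inl x) S).toRight = S.toRight := by
  constructor <;> ext y <;> simp

theorem toLeft_ins_inr {α β : Type} [DecidableEq α] [DecidableEq β] (S : Finset (α ⊕ β)) (x : β) :
    (insert (Sum.inr x) S).toLeft = S.toLeft ∧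
      (insert (Sum.inr x) S).toRight = insert x S.toRight := by
  constructor <;> ext y <;> simp

theorem sum_ext {α β : Type} {S T : Finset (α ⊕ β)} (h1 : S.toLeft = T.toLeft)
    (h2 : S.toRight = T.toRight) : S = T := by
  ext (x | x)
  · rw [← Finset.mem_toLeft, h1, Finset.mem_toLeft]
  · rw [← Finset.mem_toRight, h2, Finset.mem_toRight]

theorem exGood_mul {K a L b : ℕ} (h1 : ExGood K a) (h2 : ExGood L b) :
    ExGood (K + L) (a * b) := by
  obtain ⟨α, _, _, r, hr⟩ := h1
  obtain ⟨β, _, _, q, hq⟩ := h2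
  refine ⟨α ⊕ β, inferInstance, inferInstance, fun S => r S.toLeft + q S.toRight, ?_⟩
  refine ⟨?_, ?_, ?_, ?_, ?_, ?_, ?_⟩
  · intro S T h
    exact add_le_add (hr.mono (Finset.toLeft_subset_toLeft h))
      (hq.mono (Finset.toRight_subset_toRight h))
  · have e1 : (∅ : Finset (α ⊕ β)).toLeft = ∅ := by ext; simp
    have e2 : (∅ : Finset (α ⊕ β)).toRight = ∅ := by ext; simp
    simp only [e1, e2, hr.bot, hq.bot]
  · have e1 : (univ : Finset (α ⊕ β)).toLeft = univ := by ext; simp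
    have e2 : (univ : Finset (α ⊕ β)).toRight = univ := by ext; simp
    simp only [e1, e2, hr.top, hq.top]
  · rintro S ⟨x | x, hx⟩
    · obtain ⟨y, hy, h⟩ := hr.down S.toLeft ⟨x, by simpa using hx⟩
      refine ⟨Sum.inl y, by simpa using hy, ?_⟩
      rw [(toLeft_erase_inl S y).1, (toLeft_erase_inl S y).2]; omega
    · obtain ⟨y, hy, h⟩ := hq.down S.toRight ⟨x, by simpa using hx⟩
      refine ⟨Sum.inr y, by simpa using hy, ?_⟩
      rw [(toLeft_erase_inr S y).1, (toLeft_erase_inr S y).2]; omega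
  · intro S hS
    obtain ⟨x | x, hx⟩ : ∃ x, x ∉ S := by
      by_contra! hc
      exact hS (Finset.eq_univ_iff_forall.2 hc)
    · obtain ⟨y, hy, h⟩ := hr.up S.toLeft (fun h => hx (by
        have := Finset.mem_univ x; rw [← h] at this; simpa using this))
      refine ⟨Sum.inl y, by simpa using hy, ?_⟩
      rw [(toLeft_ins_inl S y).1, (toLeft_ins_inl S y).2]; omega
    · obtain ⟨y, hy, h⟩ := hq.up S.toRight (fun h => hx (by
        have := Finset.mem_univ x; rw [← h] at this; simpa using this))
      refine ⟨Sum.inr y, by simpa using hy, ?_⟩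
      rw [(toLeft_ins_inr S y).1, (toLeft_ins_inr S y).2]; omega
  · refine le_trans ?_ (Nat.mul_le_mul hr.lo hq.lo)
    rw [← Finset.card_product]
    refine Finset.card_le_card_of_injOn (fun S => (S.toLeft, S.toRight)) ?_ ?_
    · intro S hS
      have hS : LowCrit (fun S : Finset (α ⊕ β) => r S.toLeft + q S.toRight) S := by simpa using hS
      simp only [Finset.coe_product, Set.mem_prod, Finset.mem_coe, Finset.mem_filter,
        Finset.mem_univ, true_and]
      refine ⟨fun x hx => ?_, fun x hx => ?_⟩
      · have := hS (Sum.inl x) (by simpa using hx)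
        simp only [(toLeft_erase_inl S x).1, (toLeft_erase_inl S x).2] at this; omega
      · have := hS (Sum.inr x) (by simpa using hx)
        simp only [(toLeft_erase_inr S x).1, (toLeft_erase_inr S x).2] at this; omega
    · intro S _ T _ h
      simp only [Prod.mk.injEq] at h
      exact sum_ext h.1 h.2
  · refine le_trans ?_ (Nat.mul_le_mul hr.hi hq.hi)
    rw [← Finset.card_product]
    refine Finset.card_le_card_of_injOn (fun S => (S.toLeft, S.toRight)) ?_ ?_
    · intro S hS
      have hS : UpCrit (fun S : Finset (α ⊕ β) => r S.toLeft + q S.toRight) S := by simpa using hS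
      simp only [Finset.coe_product, Set.mem_prod, Finset.mem_coe, Finset.mem_filter,
        Finset.mem_univ, true_and]
      refine ⟨fun x hx => ?_, fun x hx => ?_⟩
      · have := hS (Sum.inl x) (by simpa using hx)
        simp only [(toLeft_ins_inl S x).1, (toLeft_ins_inl S x).2] at this; omega
      · have := hS (Sum.inr x) (by simpa using hx)
        simp only [(toLeft_ins_inr S x).1, (toLeft_ins_inr S x).2] at this; omega
    · intro S _ T _ h
      simp only [Prod.mk.injEq] at h
      exact sum_ext h.1 h.2

theorem exGood_all (j i : ℕ) : ExGood (5 * j + i) (28 ^ j * 2 ^ i) := by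
  have h1 : ∀ j, ExGood (5 * j) (28 ^ j) := by
    intro j
    induction j with
    | zero => exact exGood_zero
    | succ j ih => rw [pow_succ]; exact exGood_mul ih exGood_five
  have h2 : ∀ i, ExGood i (2 ^ i) := by
    intro i
    induction i with
    | zero => exact exGood_zero
    | succ j ih => rw [pow_succ]; exact exGood_mul ih exGood_one
  exact exGood_mul (h1 j) (h2 i)

section chains

variable {α : Type} [Fintype α] [DecidableEq α] {r : Finset α → ℕ} {K a : ℕ}

theorem low_lt (h : Good α r K a) {S T : Finset α} (hT : LowCrit r T) (hST : S ⊂ T) :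
    r S < r T := by
  obtain ⟨x, hx, hxS⟩ := Finset.exists_of_ssubset hST
  refine lt_of_le_of_lt (h.mono ?_) (hT x hx)
  exact Finset.subset_erase.2 ⟨hST.subset, hxS⟩

theorem up_lt (h : Good α r K a) {S T : Finset α} (hS : UpCrit r S) (hST : S ⊂ T) :
    r S < r T := by
  obtain ⟨x, hx, hxS⟩ := Finset.exists_of_ssubset hST
  refine lt_of_lt_of_le (hS x hxS) (h.mono ?_)
  exact Finset.insert_subset hx hST.subset

theorem exists_low (h : Good α r K a) (V : Finset α) :
    ∃ S ⊆ V, r S = r V ∧ LowCrit r S := by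
  induction V using Finset.strongInduction with
  | H V ih =>
    by_cases hV : LowCrit r V
    · exact ⟨V, subset_rfl, rfl, hV⟩
    · unfold LowCrit at hV
      push Not at hV
      obtain ⟨x, hx, hle⟩ := hV
      obtain ⟨S, hS, h1, h2⟩ := ih _ (Finset.erase_ssubset hx)
      have := h.mono (Finset.erase_subset x V)
      exact ⟨S, hS.trans (Finset.erase_subset _ _), by omega, h2⟩

theorem exists_up (h : Good α r K a) (V : Finset α) :
    ∃ S, V ⊆ S ∧ r S = r V ∧ UpCrit r S := by
  induction hd : Vᶜ.card using Nat.strong_induction_on generalizing V with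
  | _ d ih =>
    by_cases hV : UpCrit r V
    · exact ⟨V, subset_rfl, rfl, hV⟩
    · unfold UpCrit at hV
      push Not at hV
      obtain ⟨x, hx, hle⟩ := hV
      have hlt : (insert x V)ᶜ.card < d := by
        rw [← hd]
        exact Finset.card_lt_card (compl_lt_compl_iff_lt.2 (Finset.ssubset_insert hx))
      obtain ⟨S, hS, h1, h2⟩ := ih _ hlt _ rfl
      have := h.mono (Finset.subset_insert x V)
      exact ⟨S, (Finset.subset_insert _ _).trans hS, by omega, h2⟩

theorem low_chain (h : Good α r K a) (ρ : ℕ) : ∀ V : Finset α, r V = ρ →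
    ∃ C : ℕ → Finset α, (∀ i ≤ ρ, LowCrit r (C i) ∧ r (C i) = i ∧ C i ⊆ V) ∧
      ∀ i < ρ, C i ⊆ C (i + 1) := by
  induction ρ with
  | zero =>
    intro V hV
    obtain ⟨S, hS, h1, h2⟩ := exists_low h V
    exact ⟨fun _ => S, fun i hi => ⟨h2, by simp only; omega, hS⟩, fun i hi => by omega⟩
  | succ ρ ih =>
    intro V hV
    obtain ⟨S, hS, h1, h2⟩ := exists_low h V
    have hne : S.Nonempty := by
      rw [Finset.nonempty_iff_ne_empty]
      rintro rfl
      rw [h.bot] at h1; omega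
    obtain ⟨x, hx, hd⟩ := h.down S hne
    have hl := h2 x hx
    obtain ⟨C, hC, hC2⟩ := ih (S.erase x) (by omega)
    have hSub : S.erase x ⊆ S := Finset.erase_subset _ _
    refine ⟨fun i => if i ≤ ρ then C i else S, fun i hi => ?_, fun i hi => ?_⟩
    · by_cases hi' : i ≤ ρ
      · simp only [hi', if_true]
        obtain ⟨a1, a2, a3⟩ := hC i hi'
        exact ⟨a1, a2, a3.trans (hSub.trans hS)⟩
      · simp only [hi', if_false]
        exact ⟨h2, by omega, hS⟩
    · by_cases hi' : i + 1 ≤ ρ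
      · simp only [hi', if_true, show i ≤ ρ by omega]
        exact hC2 i (by omega)
      · simp only [hi', if_false, show i ≤ ρ by omega, if_true]
        exact (hC i (by omega)).2.2.trans hSub

theorem up_chain (h : Good α r K a) (d : ℕ) : ∀ V : Finset α, r V + d = K →
    ∃ C : ℕ → Finset α, (∀ i ≤ d, UpCrit r (C i) ∧ r (C i) + i = K ∧ V ⊆ C i) ∧
      ∀ i < d, C (i + 1) ⊆ C i := by
  induction d with
  | zero =>
    intro V hV
    obtain ⟨S, hS, h1, h2⟩ := exists_up h V
    exact ⟨fun _ => S, fun i hi => ⟨h2, by simp only; omega, hS⟩, fun i hi => by omega⟩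
  | succ d ih =>
    intro V hV
    obtain ⟨S, hS, h1, h2⟩ := exists_up h V
    have hne : S ≠ univ := by
      rintro rfl
      rw [h.top] at h1; omega
    obtain ⟨x, hx, hd⟩ := h.up S hne
    have hl := h2 x hx
    obtain ⟨C, hC, hC2⟩ := ih (insert x S) (by omega)
    have hSub : S ⊆ insert x S := Finset.subset_insert _ _
    refine ⟨fun i => if i ≤ d then C i else S, fun i hi => ?_, fun i hi => ?_⟩
    · by_cases hi' : i ≤ d
      · simp only [hi', if_true]
        obtain ⟨a1, a2, a3⟩ := hC i hi'
        exact ⟨a1, a2, (hS.trans hSub).trans a3⟩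
      · simp only [hi', if_false]
        exact ⟨h2, by omega, hS⟩
    · by_cases hi' : i + 1 ≤ d
      · simp only [hi', if_true, show i ≤ d by omega]
        exact hC2 i (by omega)
      · simp only [hi', if_false, show i ≤ d by omega, if_true]
        exact hSub.trans (hC i (by omega)).2.2

/-- A good rank function yields a saturated Sperner system. -/
theorem sat_of_good (h : Good α r K a) (e : α ↪ ℕ) (H X : Finset ℕ) (p : ℕ) (hp : p ∈ H)
    (heH : ∀ x, e x ∉ H) (hX : univ.map e ∪ H = X) :
    ∃ F : Finset (Finset ℕ), IsSatKSperner X F (K + 2) ∧ F.card ≤ 2 * a := by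
  let Fs := (univ.filter fun S : Finset α => LowCrit r S).image fun S => S.map e
  let Fl := (univ.filter fun S : Finset α => UpCrit r S).image fun S => S.map e ∪ H
  have memF : ∀ A, A ∈ Fs ∪ Fl ↔
      (∃ S, LowCrit r S ∧ S.map e = A) ∨ (∃ S, UpCrit r S ∧ S.map e ∪ H = A) := by
    intro A; simp [Fs, Fl]
  have hpe : ∀ S : Finset α, p ∉ S.map e := by
    intro S hS
    obtain ⟨x, _, rfl⟩ := Finset.mem_map.1 hS
    exact heH x hp
  let V : Finset ℕ → Finset α := fun A => univ.filter fun x => e x ∈ A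
  have hVmono : ∀ A B, A ⊆ B → V A ⊆ V B := by
    intro A B hAB x hx
    simp only [V, Finset.mem_filter, Finset.mem_univ, true_and] at hx ⊢
    exact hAB hx
  have hVs : ∀ S, V (S.map e) = S := by intro S; ext x; simp [V]
  have hVl : ∀ S, V (S.map e ∪ H) = S := by intro S; ext x; simp [V, heH]
  have hle : ∀ S, r S ≤ K := by
    intro S; rw [← h.top]; exact h.mono (Finset.subset_univ S)
  refine ⟨Fs ∪ Fl, ⟨?_, ?_, ?_⟩, ?_⟩
  · intro A hA
    rw [← hX]
    rcases (memF A).1 hA with ⟨S, _, rfl⟩ | ⟨S, _, rfl⟩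
    · exact (Finset.map_subset_map.2 (Finset.subset_univ S)).trans Finset.subset_union_left
    · exact Finset.union_subset_union (Finset.map_subset_map.2 (Finset.subset_univ S)) subset_rfl
  · rintro ⟨C, hC, hCF⟩
    let Λ : Finset ℕ → ℕ := fun A => r (V A) + if p ∈ A then 1 else 0
    have hΛle : ∀ A, Λ A < K + 2 := by
      intro A
      have := hle (V A)
      simp only [Λ]; split_ifs <;> omega
    have hΛ : ∀ A ∈ Fs ∪ Fl, ∀ B ∈ Fs ∪ Fl, A ⊂ B → Λ A < Λ B := by
      intro A hA B hB hAB
      have hv := hVmono A B hAB.subset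
      rcases (memF A).1 hA with ⟨S, hS, rfl⟩ | ⟨S, hS, rfl⟩ <;>
      rcases (memF B).1 hB with ⟨T, hT, rfl⟩ | ⟨T, hT, rfl⟩
      · rw [hVs, hVs] at hv
        have hne : S ≠ T := by rintro rfl; exact hAB.ne rfl
        have := low_lt h hT (lt_of_le_of_ne hv hne)
        simp only [Λ, hVs, hpe, if_false]; omega
      · rw [hVs, hVl] at hv
        have := h.mono hv
        simp only [Λ, hVs, hVl, hpe, if_false, Finset.mem_union, hp, or_true, if_true]; omega
      · exact absurd (hAB.subset (Finset.mem_union_right _ hp)) (hpe T)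
      · rw [hVl, hVl] at hv
        have hne : S ≠ T := by rintro rfl; exact hAB.ne rfl
        have := up_lt h hS (lt_of_le_of_ne hv hne)
        simp only [Λ, hVl, Finset.mem_union, hp, or_true, if_true]; omega
    have hmono : StrictMono fun i : Fin (K + 2 + 1) => (⟨Λ (C i), hΛle _⟩ : Fin (K + 2)) := by
      intro i j hij
      exact hΛ _ (hCF i) _ (hCF j) (hC hij)
    have := Fintype.card_le_of_injective _ hmono.injective
    simp at this
  · intro A hAX hAF
    obtain ⟨C, hC, hC2⟩ := low_chain h (r (V A)) (V A) rfl
    have hKle := hle (V A)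
    obtain ⟨U, hU, hU2⟩ := up_chain h (K - r (V A)) (V A) (by omega)
    generalize hρ : r (V A) = ρ at *
    have hAsub : A ⊆ (V A).map e ∪ H := by
      intro y hy
      have := hAX hy
      rw [← hX, Finset.mem_union] at this
      rcases this with h1 | h1
      · obtain ⟨x, _, rfl⟩ := Finset.mem_map.1 h1
        exact Finset.mem_union_left _ (Finset.mem_map_of_mem e (by simpa [V] using hy))
      · exact Finset.mem_union_right _ h1
    have hsubA : (V A).map e ⊆ A := by
      intro y hy
      obtain ⟨x, hx, rfl⟩ := Finset.mem_map.1 hy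
      simpa [V] using hx
    let D : ℕ → Finset ℕ := fun i =>
      if i ≤ ρ then (C i).map e else if i = ρ + 1 then A else (U (K + 2 - i)).map e ∪ H
    have D1 : ∀ i ≤ ρ, D i = (C i).map e := fun i hi => by simp [D, hi]
    have D2 : D (ρ + 1) = A := by simp [D]
    have D3 : ∀ i, ρ + 2 ≤ i → D i = (U (K + 2 - i)).map e ∪ H := fun i hi => by
      simp [D, show ¬ i ≤ ρ by omega, show i ≠ ρ + 1 by omega]
    have m1 : ∀ i ≤ ρ, (C i).map e ∈ Fs ∪ Fl := fun i hi =>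
      (memF _).2 (Or.inl ⟨_, (hC i hi).1, rfl⟩)
    have m2 : ∀ i ≤ K - ρ, (U i).map e ∪ H ∈ Fs ∪ Fl := fun i hi =>
      (memF _).2 (Or.inr ⟨_, (hU i hi).1, rfl⟩)
    have hstep : ∀ i < K + 2, D i ⊂ D (i + 1) := by
      intro i hi
      rcases lt_trichotomy i ρ with hlt | heq | hgt
      · rw [D1 i hlt.le, D1 (i + 1) hlt]
        refine lt_of_le_of_ne (Finset.map_subset_map.2 (hC2 i hlt)) fun hE => ?_
        have hE' := congrArg r (Finset.map_injective e hE)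
        rw [(hC i hlt.le).2.1, (hC (i + 1) hlt).2.1] at hE'
        omega
      · subst heq
        rw [D1 i le_rfl, D2]
        refine lt_of_le_of_ne ((Finset.map_subset_map.2 (hC i le_rfl).2.2).trans hsubA)
          fun hE => ?_
        exact hAF (hE ▸ m1 i le_rfl)
      · rcases eq_or_lt_of_le (Nat.succ_le_of_lt hgt) with heq | hgt2
        · have hi' : i = ρ + 1 := by omega
          subst hi'
          rw [D2, D3 _ (by omega)]
          have hle' : K + 2 - (ρ + 1 + 1) ≤ K - ρ := by omega
          refine lt_of_le_of_ne (hAsub.trans (Finset.union_subset_union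
            (Finset.map_subset_map.2 (hU _ hle').2.2) subset_rfl)) fun hE => ?_
          exact hAF (hE ▸ m2 _ hle')
        · have hgt2 : ρ + 2 ≤ i := hgt2
          rw [D3 i hgt2, D3 (i + 1) (by omega)]
          have e1 : K + 2 - i = (K + 2 - (i + 1)) + 1 := by omega
          have hs := hU2 (K + 2 - (i + 1)) (by omega)
          rw [← e1] at hs
          refine lt_of_le_of_ne (Finset.union_subset_union
            (Finset.map_subset_map.2 hs) subset_rfl) fun hE => ?_
          have hE' := congrArg (fun B => r (V B)) hE
          simp only [hVl] at hE'
          have b1 := (hU (K + 2 - i) (by omega)).2.1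
          have b2 := (hU (K + 2 - (i + 1)) (by omega)).2.1
          omega
    refine ⟨fun i => D i, ?_, ?_⟩
    · rw [Fin.strictMono_iff_lt_succ]
      intro i
      exact hstep i i.2
    · intro i
      have hi := i.2
      change D i ∈ _
      rcases lt_trichotomy (i : ℕ) (ρ + 1) with hlt | heq | hgt
      · rw [D1 i (by omega)]
        exact Finset.mem_insert_of_mem (m1 i (by omega))
      · rw [heq, D2]
        exact Finset.mem_insert_self _ _
      · rw [D3 i (by omega)]
        exact Finset.mem_insert_of_mem (m2 _ (by omega))
  · have c1 : Fs.card ≤ a := Finset.card_image_le.trans h.lo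
    have c2 : Fl.card ≤ a := Finset.card_image_le.trans h.hi
    have := Finset.card_union_le Fs Fl
    omega

end chains

theorem real_bound (j i : ℕ) (hi : i < 5) :
    ((2 * (28 ^ j * 2 ^ i) : ℕ) : ℝ) ≤
      2 ^ ((1 - (1 - Real.logb 2 28 / 5)) * ((5 * j + i + 2 : ℕ) : ℝ)) := by
  have e1 : (1 - (1 - Real.logb 2 28 / 5)) * ((5 * j + i + 2 : ℕ) : ℝ)
      = Real.logb 2 28 * (((5 * j + i + 2 : ℕ) : ℝ) / 5) := by ring
  rw [e1, Real.rpow_mul (by norm_num), Real.rpow_logb (by norm_num) (by norm_num) (by norm_num)]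
  refine le_of_pow_le_pow_left₀ (n := 5) (by norm_num) (by positivity) ?_
  rw [← Real.rpow_natCast (_ ^ (_ : ℝ)) 5, ← Real.rpow_mul (by norm_num)]
  rw [show ((5 * j + i + 2 : ℕ) : ℝ) / 5 * ((5 : ℕ) : ℝ) = ((5 * j + i + 2 : ℕ) : ℝ) by
    push_cast; ring, Real.rpow_natCast]
  have h : (2 * (28 ^ j * 2 ^ i)) ^ 5 ≤ 28 ^ (5 * j + i + 2) := by
    have h5 : (2 * 2 ^ i) ^ 5 ≤ 28 ^ (i + 2) := by
      interval_cases i <;> norm_num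
    calc (2 * (28 ^ j * 2 ^ i)) ^ 5 = 28 ^ (5 * j) * (2 * 2 ^ i) ^ 5 := by
          rw [mul_comm 5 j, pow_mul]; ring
      _ ≤ 28 ^ (5 * j) * 28 ^ (i + 2) := Nat.mul_le_mul_left _ h5
      _ = _ := by rw [← pow_add, add_assoc]
  exact_mod_cast h

theorem upper_bound_28 :
    ∀ k : ℕ, 7 ≤ k → ∃ n₀ : ℕ, ∀ n : ℕ, n₀ ≤ n →
      ∃ F : Finset (Finset ℕ), IsSatKSperner (Finset.Icc 1 n) F k ∧
        (F.card : ℝ) ≤ 2 ^ ((1 - (1 - Real.logb 2 28 / 5)) * k) := by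
  intro k hk
  obtain ⟨j, i, hi, rfl⟩ : ∃ j i, i < 5 ∧ k = 5 * j + i + 2 :=
    ⟨(k - 2) / 5, (k - 2) % 5, Nat.mod_lt _ (by norm_num), by omega⟩
  obtain ⟨α, _, _, r, h⟩ := exGood_all j i
  refine ⟨Fintype.card α + 1, fun n hn => ?_⟩
  let f := Fintype.equivFin α
  let e : α ↪ ℕ := ⟨fun x => (f x : ℕ) + 1, fun x y hxy => by
    apply f.injective
    apply Fin.ext
    simpa using hxy⟩
  obtain ⟨F, hF, hc⟩ := sat_of_good h e (Finset.Icc (Fintype.card α + 1) n) (Finset.Icc 1 n) n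
    (Finset.mem_Icc.2 ⟨hn, le_rfl⟩) (fun x hx => by
      have h1 := (Finset.mem_Icc.1 hx).1
      have h2 : (f x : ℕ) < Fintype.card α := (f x).2
      have h3 : e x = (f x : ℕ) + 1 := rfl
      omega) (by
      ext y
      simp only [Finset.mem_union, Finset.mem_map, Finset.mem_univ, true_and, Finset.mem_Icc]
      constructor
      · rintro (⟨x, rfl⟩ | hy)
        · have h2 : (f x : ℕ) < Fintype.card α := (f x).2
          have h3 : e x = (f x : ℕ) + 1 := rfl
          omega
        · omega
      · intro hy
        by_cases hy2 : y ≤ Fintype.card α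
        · left
          refine ⟨f.symm ⟨y - 1, by omega⟩, ?_⟩
          have h3 : ∀ x, e x = (f x : ℕ) + 1 := fun _ => rfl
          rw [h3, Equiv.apply_symm_apply]
          simp only
          omega
        · right; omega)
  refine ⟨F, hF, le_trans ?_ (real_bound j i hi)⟩
  exact_mod_cast hc
end

section
/- For every integer k ≥ 497 and every integer n > 2^{2^{k-1}}, every saturated k-Sperner system F ⊆ P([n]) satisfies |F| > √k · 2^{k/2}. -/
open Finset

lemma log_cubic (x : ℝ) (hx : -1 < x) : Real.log (1 + x) ≤ x - x^2/2 + x^3/3 := by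
  let h : ℝ → ℝ := fun y => y - y^2/2 + y^3/3 - Real.log (1 + y)
  have hd : ∀ y, -1 < y → HasDerivAt h (y^3/(1+y)) y := by
    intro y hy
    have h1 : (1:ℝ) + y ≠ 0 := by linarith
    have hl : HasDerivAt (fun y : ℝ => Real.log (1 + y)) (1/(1+y)) y :=
      ((hasDerivAt_id y).const_add 1).log h1
    have := ((((hasDerivAt_id y).sub (((hasDerivAt_id y).pow 2).div_const 2)).add
      (((hasDerivAt_id y).pow 3).div_const 3))).sub hl
    refine HasDerivAt.congr_deriv (f := h) this ?_
    simp only [id, Nat.cast_ofNat]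
    field_simp
    ring
  have h0 : h 0 = 0 := by simp [h]
  suffices 0 ≤ h x by simp only [h] at this; linarith
  rcases le_total 0 x with hx0 | hx0
  · have : MonotoneOn h (Set.Icc 0 x) := by
      apply monotoneOn_of_deriv_nonneg (convex_Icc _ _)
      · intro y hy
        exact (hd y (by linarith [hy.1])).continuousAt.continuousWithinAt
      · intro y hy
        rw [interior_Icc] at hy
        exact (hd y (by linarith [hy.1])).differentiableAt.differentiableWithinAt
      · intro y hy
        rw [interior_Icc] at hy
        rw [(hd y (by linarith [hy.1])).deriv]
        have := hy.1
        positivity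
    rw [← h0]
    exact this (by simp [hx0]) (by simp [hx0]) hx0
  · have : AntitoneOn h (Set.Icc x 0) := by
      apply antitoneOn_of_deriv_nonpos (convex_Icc _ _)
      · intro y hy
        exact (hd y (by linarith [hy.1])).continuousAt.continuousWithinAt
      · intro y hy
        rw [interior_Icc] at hy
        exact (hd y (by linarith [hy.1])).differentiableAt.differentiableWithinAt
      · intro y hy
        rw [interior_Icc] at hy
        rw [(hd y (by linarith [hy.1])).deriv]
        have h2 := hy.2
        have h1 : 0 < 1 + y := by linarith [hy.1]
        apply div_nonpos_of_nonpos_of_nonneg _ h1.le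
        exact (Odd.pow_neg (by decide) h2).le
    rw [← h0]
    exact this (by simp [hx0]) (by simp [hx0]) hx0

lemma log_side (K d : ℝ) (hK : 496 ≤ K) (hd : d^2 ≤ 1.5625 * K) (hd2 : 0 ≤ K/2 + d) :
    0 < 1 + 2 * Real.log 2 * d / K ∧
    (K/2 + d) * Real.log ((1 + 2 * Real.log 2 * d / K)/2)
      ≤ - (K/2) * Real.log 2 + 0.94 * d^2 / K := by
  have hK0 : 0 < K := by linarith
  obtain ⟨t, rfl⟩ : ∃ t, d = K * t := ⟨d / K, by field_simp⟩
  have hL1 := Real.log_two_gt_d9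
  have hL2 := Real.log_two_lt_d9
  set L := Real.log 2 with hL
  have e1 : 2 * L * (K * t) / K = 2 * L * t := by field_simp
  have e2 : 0.94 * (K*t)^2 / K = K * (0.94 * t^2) := by field_simp
  rw [e1, e2]
  have ht2 : t^2 ≤ 0.00316 := by
    have : K * t^2 ≤ 1.5625 := by
      have : K * (K * t^2) ≤ K * 1.5625 := by linarith
      exact le_of_mul_le_mul_left this hK0
    nlinarith [sq_nonneg t]
  have ht : |t| ≤ 0.0563 := by
    apply abs_le_of_sq_le_sq _ (by norm_num)
    linarith
  rw [abs_le] at ht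
  have hpos : 0 < 1 + 2 * L * t := by nlinarith
  refine ⟨hpos, ?_⟩
  have hlog : Real.log ((1 + 2 * L * t)/2) ≤ 2*L*t - (2*L*t)^2/2 + (2*L*t)^3/3 - L := by
    rw [Real.log_div hpos.ne' (by norm_num)]
    have := log_cubic (2*L*t) (by linarith)
    linarith
  have hhalf : 0 ≤ 1/2 + t := by linarith
  have key : (1/2+t) * (2*L*t - (2*L*t)^2/2 + (2*L*t)^3/3 - L) ≤ -L/2 + 0.94*t^2 := by
    have : (1/2+t) * (2*L*t - (2*L*t)^2/2 + (2*L*t)^3/3 - L)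
      = -L/2 + t^2*(2*L - L^2 + t*(4*L^3/3 - 2*L^2) + 8*L^3/3*t^2) := by ring
    rw [this]
    have hb : 2*L - L^2 + t*(4*L^3/3 - 2*L^2) + 8*L^3/3*t^2 ≤ 0.94 := by
      have l2a : L^2 ≤ 0.4805 := by nlinarith
      have l2b : 0.4804 ≤ L^2 := by nlinarith
      have l3a : L^3 ≤ 0.3331 := by nlinarith
      have l3b : 0.3329 ≤ L^3 := by nlinarith
      have : 8*L^3/3*t^2 ≤ 0.0029 := by nlinarith [sq_nonneg t]
      have : t*(4*L^3/3 - 2*L^2) ≤ 0.0563 * (2*L^2 - 4*L^3/3) := by nlinarith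
      linarith
    nlinarith [sq_nonneg t]
  have hK' : K/2 + K*t = K*(1/2+t) := by ring
  rw [hK', mul_assoc]
  have := mul_le_mul_of_nonneg_left hlog hhalf
  have := mul_le_mul_of_nonneg_left (this.trans key) hK0.le
  linarith

lemma exp_quad (y : ℝ) (h2 : y ≤ 2) : 1 - y + y^2/4 ≤ Real.exp (-y) := by
  have h1 : 1 - y/2 ≤ Real.exp (-(y/2)) := by
    have := Real.add_one_le_exp (-(y/2)); linarith
  have h3 : Real.exp (-y) = Real.exp (-(y/2))^2 := by
    rw [← Real.exp_nat_mul]; congr 1; push_cast; ring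
  rw [h3]
  nlinarith

lemma sum_quad (N : ℕ) (a : ℝ) : ∑ j ∈ range N, ((j:ℝ) - a)^2
    = ((N:ℝ)-1)*N*(2*N-1)/6 - a*N*(N-1) + a^2*N := by
  induction N with
  | zero => simp
  | succ n ih => rw [sum_range_succ, ih]; push_cast; ring

lemma sum_quart (N : ℕ) (a : ℝ) : ∑ j ∈ range N, ((j:ℝ) - a)^4
    = (6*(N:ℝ)^5 - 15*N^4+10*N^3 - N)/30 - a*N^2*(N-1)^2 + a^2*((N:ℝ)-1)*N*(2*N-1)
      - 2*a^3*N*(N-1) + a^4*N := by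
  induction N with
  | zero => simp
  | succ n ih => rw [sum_range_succ, ih]; push_cast; ring

lemma sum_poly (K : ℝ) (N : ℕ) (hK : 496 ≤ K) (h1 : 2.3 * √K ≤ N) (h2 : N ≤ 2.5 * √K) :
    √(K+1) * √2 < ∑ j ∈ range N,
      (1 - 0.94 * ((j:ℝ) - (N-1)/2)^2/K + (0.94 * ((j:ℝ) - (N-1)/2)^2/K)^2/4) := by
  have e : ∀ j : ℕ, (1 - 0.94 * ((j:ℝ) - (N-1)/2)^2/K + (0.94 * ((j:ℝ) - (N-1)/2)^2/K)^2/4)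
    = 1 - 0.94/K * ((j:ℝ) - (N-1)/2)^2 + 0.2209/K^2 * ((j:ℝ) - (N-1)/2)^4 := by
    intro j; ring
  simp_rw [e]
  rw [sum_add_distrib, sum_sub_distrib, ← mul_sum, ← mul_sum, sum_quad, sum_quart]
  simp only [sum_const, card_range, nsmul_eq_mul, mul_one]
  have hK0 : 0 < K := by linarith
  set s := √K with hs
  have hs2 : s^2 = K := Real.sq_sqrt hK0.le
  have hs0 : 0 < s := Real.sqrt_pos.2 hK0
  have hs22 : 22 ≤ s := by nlinarith
  obtain ⟨τ, hτ⟩ : ∃ τ, (N:ℝ) = s * τ := ⟨N / s, by field_simp⟩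
  rw [hτ] at h1 h2 ⊢
  have t1 : 2.3 ≤ τ := by
    have : s * 2.3 ≤ s * τ := by linarith
    exact le_of_mul_le_mul_left this hs0
  have t2 : τ ≤ 2.5 := by
    have : s * τ ≤ s * 2.5 := by linarith
    exact le_of_mul_le_mul_left this hs0
  have hl : √(K+1) * √2 < 1.417 * s := by
    rw [← Real.sqrt_mul (by linarith)]
    rw [Real.sqrt_lt' (by positivity)]
    nlinarith
  refine hl.trans_le ?_
  have hid : s*τ - 0.94/K * ((s*τ-1)*(s*τ)*(2*(s*τ)-1)/6 - (s*τ-1)/2*(s*τ)*(s*τ-1) + ((s*τ-1)/2)^2*(s*τ))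
     + 0.2209/K^2 * ((6*(s*τ)^5 - 15*(s*τ)^4+10*(s*τ)^3 - (s*τ))/30 - (s*τ-1)/2*(s*τ)^2*(s*τ-1)^2 + ((s*τ-1)/2)^2*(s*τ-1)*(s*τ)*(2*(s*τ)-1)
      - 2*((s*τ-1)/2)^3*(s*τ)*(s*τ-1) + ((s*τ-1)/2)^4*(s*τ))
     = s * (τ - 0.94/12 * (τ^3 - τ/K) + 0.2209/240 * (3*τ^5 - 10 * τ^3/K + 7*τ/K^2)) := by
    rw [← hs2]
    field_simp
    ring
  rw [hid, mul_comm]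
  apply mul_le_mul_of_nonneg_left _ hs0.le
  have hi : τ^3/K ≤ 0.04 := by
    rw [div_le_iff₀ hK0]
    have : τ^3 ≤ 2.5^3 := by gcongr
    linarith
  have hj : 0 ≤ τ/K := by positivity
  have hj' : 0 ≤ τ/K^2 := by positivity
  have hp : 1.418 ≤ τ - 0.94/12 * τ^3 + 0.2209/80*τ^5 := by
    nlinarith [mul_nonneg (sub_nonneg.2 t1) (sub_nonneg.2 t2), sq_nonneg (τ^2-5.7), sq_nonneg τ,
      mul_nonneg (sq_nonneg (τ^2-5.7)) (by linarith : 0 ≤ τ)]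
  have e1 : 10 * τ^3/K = 10 * (τ^3/K) := by ring
  have e2 : 7 * τ/K^2 = 7 * (τ/K^2) := by ring
  rw [e1, e2]
  linarith

/-- Height (within `G`) of a set. -/
noncomputable def hgt (G : Finset (Finset ℕ)) (A : Finset ℕ) : ℕ :=
  open Classical in
  if h : A ∈ G then (Order.height (⟨A, h⟩ : {B // B ∈ G})).toNat else 0

lemma height_le_card (G : Finset (Finset ℕ)) (A : {B // B ∈ G}) :
    Order.height A ≤ (A.1.card : ℕ∞) := by
  have hf : StrictMono (fun B : {B // B ∈ G} => B.1.card) := fun a b h => card_lt_card h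
  have := Order.height_le_height_apply_of_strictMono _ hf A
  simpa using this

lemma hgt_le_card (G : Finset (Finset ℕ)) (A : Finset ℕ) : hgt G A ≤ A.card := by
  unfold hgt
  split_ifs with h
  · have := height_le_card G ⟨A, h⟩
    exact ENat.toNat_le_of_le_natCast this
  · simp

lemma exists_hgt (G : Finset (Finset ℕ)) (S : Finset ℕ) (m : ℕ) (C : Fin m → Finset ℕ)
    (hC : StrictMono C) (hG : ∀ i, C i ∈ G) (hS : ∀ i, C i ⊆ S) (w : ℕ) (hw : w < m) :
    ∃ A ∈ G, hgt G A = w ∧ A ⊆ S := by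
  have hh : ∀ i (hi : i < m), (i : ℕ∞) ≤ Order.height (⟨C ⟨i, hi⟩, hG _⟩ : {B // B ∈ G}) := by
    intro i
    induction i with
    | zero => intro hi; simp
    | succ j ih =>
      intro hi
      have h1 := ih (by omega)
      have hlt : (⟨C ⟨j, by omega⟩, hG _⟩ : {B // B ∈ G}) < ⟨C ⟨j+1, hi⟩, hG _⟩ :=
        hC (by simp [Fin.lt_def])
      have h2 := Order.height_add_one_le hlt
      push_cast
      exact (add_le_add_left h1 1).trans h2
  have hfin : Order.height (⟨C ⟨w, hw⟩, hG _⟩ : {B // B ∈ G}) < ⊤ :=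
    (height_le_card G _).trans_lt (ENat.natCast_lt_top _)
  rcases (hh w hw).eq_or_lt with h | h
  · refine ⟨C ⟨w, hw⟩, hG _, ?_, hS _⟩
    unfold hgt
    rw [dif_pos (hG _), ← h]; simp
  · rw [Order.coe_lt_height_iff hfin] at h
    obtain ⟨⟨B, hB⟩, hlt, he⟩ := h
    refine ⟨B, hB, ?_, ?_⟩
    · unfold hgt
      rw [dif_pos hB, he]; simp
    · have : B ⊂ C ⟨w, hw⟩ := hlt
      exact this.subset.trans (hS _)

lemma sum_superset (Y A : Finset ℕ) (hA : A ⊆ Y) (p q : ℝ) (hpq : p + q = 1) :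
    ∑ S ∈ Y.powerset with A ⊆ S, p ^ S.card * q ^ (Y \ S).card = p ^ A.card := by
  have h := prod_add (fun _ => p) (fun i => if i ∈ A then 0 else q) Y
  have h1 : ∏ i ∈ Y, (p + if i ∈ A then 0 else q) = p ^ A.card := by
    rw [← prod_sdiff hA]
    rw [prod_congr rfl (g := fun _ => 1), prod_congr (s₁ := A) rfl (g := fun _ => p)]
    · simp
    · intro i hi; simp [hi]
    · intro i hi; simp [(mem_sdiff.1 hi).2, hpq]
  rw [h1] at h
  rw [h, sum_filter]
  apply sum_congr rfl
  intro S hS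
  split_ifs with hAS
  · congr 1
    · simp
    · rw [prod_congr rfl (g := fun _ => q)]
      · simp
      · intro i hi
        rw [if_neg]
        intro hiA
        exact (mem_sdiff.1 hi).2 (hAS hiA)
  · rw [not_subset] at hAS
    obtain ⟨i, hiA, hiS⟩ := hAS
    rw [prod_eq_zero (s := Y \ S) (i := i) (by simp [hiS, hA hiA]) (by simp [hiA])]
    simp

lemma sum_subset' (Y T : Finset ℕ) (hT : T ⊆ Y) (p q : ℝ) (hpq : p + q = 1) :
    ∑ S ∈ Y.powerset with T ⊆ Y \ S, p ^ S.card * q ^ (Y \ S).card = q ^ T.card := by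
  rw [← sum_superset Y T hT q p (by linarith)]
  refine sum_bij' (fun S _ => Y \ S) (fun S _ => Y \ S) ?_ ?_ ?_ ?_ ?_
  · intro S hS; simp at hS ⊢; exact hS.2
  · intro S hS; simp at hS ⊢
    rw [inter_eq_right.2 hS.1]; exact hS.2
  · intro S hS; simp at hS ⊢; exact hS.1
  · intro S hS; simp at hS ⊢; exact hS.1
  · intro S hS
    simp only [mem_filter, mem_powerset] at hS
    rw [Finset.sdiff_sdiff_eq_self hS.1, mul_comm]

/-- Covering inequality. -/
lemma cover (Y : Finset ℕ) (P Q : Finset (Finset ℕ)) (w w' : ℕ) (p q : ℝ) (hpq : p + q = 1)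
    (hp : 0 < p) (hq : 0 < q)
    (hP : ∀ A ∈ P, A ⊆ Y ∧ w ≤ A.card) (hQ : ∀ A ∈ Q, A ⊆ Y ∧ w' ≤ A.card)
    (hc : ∀ S ⊆ Y, (∃ A ∈ P, A ⊆ S) ∨ (∃ T ∈ Q, T ⊆ Y \ S)) :
    1 ≤ P.card * p ^ w + Q.card * q ^ w' := by
  have h1 : ∑ S ∈ Y.powerset, p ^ S.card * q ^ (Y \ S).card = 1 := by
    have := sum_superset Y ∅ (by simp) p q hpq
    simpa using this
  have hP' : ∑ A ∈ P, p ^ A.card ≤ P.card * p ^ w := by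
    rw [← nsmul_eq_mul]
    apply sum_le_card_nsmul
    intro A hA
    exact pow_le_pow_of_le_one hp.le (by linarith) (hP A hA).2
  have hQ' : ∑ A ∈ Q, q ^ A.card ≤ Q.card * q ^ w' := by
    rw [← nsmul_eq_mul]
    apply sum_le_card_nsmul
    intro A hA
    exact pow_le_pow_of_le_one hq.le (by linarith) (hQ A hA).2
  refine le_trans ?_ (add_le_add hP' hQ')
  rw [← sum_congr rfl (fun A hA => sum_superset Y A (hP A hA).1 p q hpq),
    ← sum_congr rfl (fun A hA => sum_subset' Y A (hQ A hA).1 p q hpq)]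
  simp_rw [sum_filter]
  rw [sum_comm, sum_comm (s := Q), ← sum_add_distrib, ← h1]
  apply sum_le_sum
  intro S hS
  have hpos : 0 ≤ p ^ S.card * q ^ (Y \ S).card := by positivity
  have n1 : ∀ A ∈ P, 0 ≤ if A ⊆ S then p ^ S.card * q ^ (Y \ S).card else 0 := by
    intro A _; split_ifs <;> simp [hpos]
  have n2 : ∀ A ∈ Q, 0 ≤ if A ⊆ Y \ S then p ^ S.card * q ^ (Y \ S).card else 0 := by
    intro A _; split_ifs <;> simp [hpos]
  rcases hc S (mem_powerset.1 hS) with ⟨A, hA, hAS⟩ | ⟨A, hA, hAS⟩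
  · have := single_le_sum n1 hA
    rw [if_pos hAS] at this
    linarith [sum_nonneg n2]
  · have := single_le_sum n2 hA
    rw [if_pos hAS] at this
    linarith [sum_nonneg n1]

lemma sum_levels (G : Finset (Finset ℕ)) (h : Finset ℕ → ℕ) (k : ℕ) :
    ∑ w ∈ range k, (G.filter fun A => h A = w).card ≤ G.card := by
  rw [sum_card_fiberwise_eq_card_filter]
  exact card_filter_le _ _

lemma sdiff_anti_strict (X A B : Finset ℕ) (hB : B ⊆ X) (h : A ⊂ B) : X \ B ⊂ X \ A := by
  rw [ssubset_iff_of_subset (sdiff_subset_sdiff Subset.rfl h.subset)]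
  obtain ⟨x, hx, hxA⟩ := exists_of_ssubset h
  exact ⟨x, mem_sdiff.2 ⟨hB hx, hxA⟩, fun h' => (mem_sdiff.1 h').2 hx⟩

lemma sum_range_add_eq' (f : ℕ → ℕ) (w N : ℕ) :
    ∑ j ∈ range N, f (w + j) = ∑ x ∈ Ico w (w + N), f x := by
  rw [sum_Ico_eq_sum_range, Nat.add_sub_cancel_left]

lemma struct (k : ℕ) (X : Finset ℕ) (F : Finset (Finset ℕ)) (hF : IsSatKSperner X F k)
    (a b : ℕ) (ha : a ∈ X) (hab : a ≠ b) (hh : ∀ A ∈ F, a ∈ A ↔ b ∈ A)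
    (w : ℕ) (hw : w < k) (S : Finset ℕ) (hS : S ⊆ X \ {a, b}) :
    (∃ A ∈ F.filter (fun A => a ∉ A), hgt (F.filter (fun A => a ∉ A)) A = w ∧ A ⊆ S) ∨
    (∃ T ∈ (F.filter (fun A => a ∈ A)).image (fun A => X \ A),
      hgt ((F.filter (fun A => a ∈ A)).image (fun A => X \ A)) T = k - 1 - w ∧
        T ⊆ (X \ {a, b}) \ S) := by
  obtain ⟨hX, hno, hsat⟩ := hF
  have haS : a ∉ S := fun h => by simpa using hS h
  have hbS : b ∉ S := fun h => by simpa using hS h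
  have hSX : insert a S ⊆ X := insert_subset ha (hS.trans sdiff_subset)
  have hnot : insert a S ∉ F := by
    intro h
    have := (hh _ h).1 (mem_insert_self _ _)
    simp [hab.symm, hbS] at this
  obtain ⟨C, hC, hCF⟩ := hsat _ hSX hnot
  have hex : ∃ i, C i = insert a S := by
    by_contra hcon
    push Not at hcon
    exact hno ⟨C, hC, fun i => (mem_insert.1 (hCF i)).resolve_left (hcon i)⟩
  obtain ⟨i, hi⟩ := hex
  have hF' : ∀ j, j ≠ i → C j ∈ F := by
    intro j hj
    refine (mem_insert.1 (hCF j)).resolve_left ?_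
    rw [← hi]
    exact fun h => hj (hC.injective h)
  have hik := i.2
  by_cases hwi : w < i.1
  · left
    have hsub : ∀ j : Fin (k+1), j < i → a ∉ C j ∧ C j ⊆ S := by
      intro j hj
      have h1 : C j ⊆ insert a S := by rw [← hi]; exact (hC hj).le
      have hb : b ∉ C j := fun h => by
        have := h1 h
        simp [hab.symm, hbS] at this
      have ha' : a ∉ C j := fun h => hb ((hh _ (hF' j hj.ne)).1 h)
      exact ⟨ha', (subset_insert_iff_of_notMem ha').1 h1⟩
    refine exists_hgt _ S i.1 (fun j => C ⟨j.1, by omega⟩) ?_ ?_ ?_ w hwi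
    · intro x y hxy
      exact hC hxy
    · intro j
      have hj : (⟨j.1, by omega⟩ : Fin (k+1)) < i := j.2
      exact mem_filter.2 ⟨hF' _ hj.ne, (hsub _ hj).1⟩
    · intro j
      exact (hsub ⟨j.1, by omega⟩ j.2).2
  · right
    have hsup : ∀ j : Fin (k+1), i < j → a ∈ C j ∧ X \ C j ⊆ (X \ {a, b}) \ S := by
      intro j hj
      have h1 : insert a S ⊆ C j := by rw [← hi]; exact (hC hj).le
      have ha' : a ∈ C j := h1 (mem_insert_self _ _)
      have hb : b ∈ C j := (hh _ (hF' j hj.ne')).1 ha'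
      refine ⟨ha', ?_⟩
      intro x hx
      rw [mem_sdiff] at hx
      simp only [mem_sdiff, mem_insert, mem_singleton, not_or]
      refine ⟨⟨hx.1, ?_, ?_⟩, ?_⟩
      · rintro rfl; exact hx.2 ha'
      · rintro rfl; exact hx.2 hb
      · intro h; exact hx.2 (h1 (mem_insert_of_mem h))
    refine exists_hgt _ _ (k - i.1) (fun j => X \ C ⟨k - j.1, by omega⟩) ?_ ?_ ?_ _ (by omega)
    · intro x y hxy
      have hy : i < (⟨k - y.1, by omega⟩ : Fin (k+1)) := by
        rw [Fin.lt_def]; have := y.2; simp only; omega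
      have hx : i < (⟨k - x.1, by omega⟩ : Fin (k+1)) := by
        rw [Fin.lt_def]; have := x.2; simp only; omega
      have hlt : C ⟨k - y.1, by omega⟩ ⊂ C ⟨k - x.1, by omega⟩ := by
        apply hC
        rw [Fin.lt_def]
        have := y.2
        have : x.1 < y.1 := hxy
        simp only; omega
      exact sdiff_anti_strict X _ _ (hX _ (hF' _ hx.ne')) hlt
    · intro j
      have hj : i < (⟨k - j.1, by omega⟩ : Fin (k+1)) := by
        rw [Fin.lt_def]; have := j.2; simp only; omega
      exact mem_image.2 ⟨_, mem_filter.2 ⟨hF' _ hj.ne', (hsup _ hj).1⟩, rfl⟩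
    · intro j
      have hj : i < (⟨k - j.1, by omega⟩ : Fin (k+1)) := by
        rw [Fin.lt_def]; have := j.2; simp only; omega
      exact (hsup _ hj).2

/-- Two points with the same trace on `F`. -/
lemma exists_twins (n M : ℕ) (F : Finset (Finset ℕ)) (hM : F.card ≤ M) (hn : 2 ^ M < n) :
    ∃ a ∈ Icc 1 n, ∃ b ∈ Icc 1 n, a ≠ b ∧ ∀ A ∈ F, a ∈ A ↔ b ∈ A := by
  have hcard : F.powerset.card < (Icc 1 n).card := by
    rw [card_powerset, Nat.card_Icc]
    have : 2 ^ F.card ≤ 2 ^ M := Nat.pow_le_pow_right (by norm_num) hM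
    omega
  obtain ⟨a, ha, b, hb, hab, he⟩ := exists_ne_map_eq_of_card_lt_of_maps_to hcard
    (f := fun x => F.filter fun A => x ∈ A) (fun x _ => mem_coe.2 (mem_powerset.2 (filter_subset _ _)))
  refine ⟨a, ha, b, hb, hab, fun A hA => ?_⟩
  have := congrArg (A ∈ ·) he
  simpa [hA] using this

lemma level_bound (K d u v : ℝ) (w w' : ℕ) (hK : 496 ≤ K) (hd : d^2 ≤ 1.5625 * K)
    (hw : (w:ℝ) = K/2 + d) (hw' : (w':ℝ) = K/2 - d) (hu : 0 ≤ u) (hv : 0 ≤ v)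
    (h : ∀ p q : ℝ, p + q = 1 → 0 < p → 0 < q → 1 ≤ u * p ^ w + v * q ^ w') :
    2 ^ (K/2) * (1 - 0.94 * d^2/K + (0.94 * d^2/K)^2/4) ≤ u + v := by
  have hK0 : 0 < K := by linarith
  obtain ⟨hp, h1⟩ := log_side K d hK hd (by rw [← hw]; positivity)
  obtain ⟨hq, h2⟩ := log_side K (-d) hK (by simpa using hd)
    (by rw [← sub_eq_add_neg, ← hw']; positivity)
  rw [← hw] at h1
  rw [← sub_eq_add_neg, ← hw', neg_sq] at h2
  set p := (1 + 2 * Real.log 2 * d / K)/2 with hpd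
  set q := (1 + 2 * Real.log 2 * (-d) / K)/2 with hqd
  have hp0 : 0 < p := by positivity
  have hq0 : 0 < q := by positivity
  have hh := h p q (by rw [hpd, hqd]; ring) hp0 hq0
  have e : ∀ (x : ℝ) (m : ℕ), 0 < x → x ^ m = Real.exp (m * Real.log x) := by
    intro x m hx
    rw [mul_comm, Real.exp_mul, Real.exp_log hx, Real.rpow_natCast]
  set E := Real.exp (-(K/2) * Real.log 2 + 0.94 * d^2/K) with hE
  have b1 : p ^ w ≤ E := by rw [e p w hp0]; exact Real.exp_le_exp.2 h1
  have b2 : q ^ w' ≤ E := by rw [e q w' hq0]; exact Real.exp_le_exp.2 h2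
  have hE0 : 0 < E := Real.exp_pos _
  have h3 : 1 ≤ (u + v) * E := by nlinarith
  have h4 : E⁻¹ ≤ u + v := by
    rw [inv_le_iff_one_le_mul₀ hE0]; exact h3
  refine le_trans ?_ h4
  rw [hE, ← Real.exp_neg, show -(-(K/2) * Real.log 2 + 0.94 * d^2/K)
    = Real.log 2 * (K/2) + -(0.94 * d^2/K) by ring, Real.exp_add,
    ← Real.rpow_def_of_pos (by norm_num)]
  apply mul_le_mul_of_nonneg_left _ (by positivity)
  apply exp_quad
  rw [div_le_iff₀ hK0]
  linarith

lemma exists_N (K : ℕ) (hK : 496 ≤ K) :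
    ∃ N w0 : ℕ, 2 * w0 + N = K + 1 ∧ 2.3 * √(K:ℝ) ≤ N ∧ N ≤ 2.5 * √(K:ℝ) := by
  have hKr : (496:ℝ) ≤ K := by exact_mod_cast hK
  set s := √(K:ℝ) with hs
  have hs2 : s^2 = K := Real.sq_sqrt (by linarith)
  have hs0 : 0 ≤ s := Real.sqrt_nonneg _
  have hs22 : 22 ≤ s := by nlinarith
  have m1 := Nat.le_ceil (2.3 * s)
  have m2 := Nat.ceil_lt_add_one (by positivity : 0 ≤ 2.3 * s)
  set m := ⌈2.3 * s⌉₊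
  obtain ⟨N, hN1, hN2, hpar⟩ : ∃ N, m ≤ N ∧ N ≤ m + 1 ∧ 2 ∣ (K + 1 + N) := by
    by_cases h : 2 ∣ (K + 1 + m)
    · exact ⟨m, by omega, by omega, h⟩
    · exact ⟨m + 1, by omega, by omega, by omega⟩
  have r1 : (m:ℝ) ≤ N := by exact_mod_cast hN1
  have r2 : (N:ℝ) ≤ m + 1 := by exact_mod_cast hN2
  have r3 : (N:ℝ) ≤ 2.5 * s := by linarith
  have r4 : N ≤ K + 1 := by
    have : (N:ℝ) ≤ K + 1 := by nlinarith
    exact_mod_cast this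
  exact ⟨N, (K + 1 - N)/2, by omega, by linarith, r3⟩

lemma sqrt_small (k : ℕ) (hk : 497 ≤ k) : √(k:ℝ) * 2 ^ ((k:ℝ)/2) < 2 ^ (k-1) := by
  have h0 : 4 * k < 2 ^ k := by
    induction k, hk using Nat.le_induction with
    | base => exact lt_of_lt_of_le (by norm_num : 4 * 497 < 2 ^ 11) (Nat.pow_le_pow_right two_pos (by norm_num))
    | succ m hm ih => rw [pow_succ]; omega
  have h0r : (4:ℝ) * k < 2 ^ k := by exact_mod_cast h0
  apply lt_of_pow_lt_pow_left₀ 2 (by positivity)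
  rw [mul_pow, Real.sq_sqrt (by positivity), ← Real.rpow_natCast (2 ^ ((k:ℝ)/2)) 2,
    ← Real.rpow_mul (by norm_num)]
  rw [show (k:ℝ)/2 * ((2:ℕ):ℝ) = (k:ℝ) by push_cast; ring, Real.rpow_natCast]
  obtain ⟨m, rfl⟩ : ∃ m, k = m + 1 := ⟨k - 1, by omega⟩
  simp only [Nat.add_sub_cancel]
  rw [pow_succ (2:ℝ) m] at h0r ⊢
  have hz : (0:ℝ) < 2 ^ m := by positivity
  clear h0 hk
  generalize (2:ℝ) ^ m = z at h0r hz ⊢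
  generalize ((m + 1 : ℕ) : ℝ) = y at h0r ⊢
  nlinarith [mul_lt_mul_of_pos_right h0r hz]

theorem lower_bound_sqrtk (k n : ℕ) (hk : 497 ≤ k) (hn : 2 ^ 2 ^ (k - 1) < n)
    (F : Finset (Finset ℕ)) (hF : IsSatKSperner (Finset.Icc 1 n) F k) :
    Real.sqrt k * 2 ^ ((k : ℝ) / 2) < F.card := by
  by_cases hbig : 2 ^ (k-1) ≤ F.card
  · refine (sqrt_small k hk).trans_le ?_
    exact_mod_cast hbig
  push Not at hbig
  obtain ⟨a, ha, b, hb, hab, hh⟩ := exists_twins n _ F hbig.le hn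
  set X := Icc 1 n with hXdef
  set P := F.filter (fun A => a ∉ A) with hP
  set L := F.filter (fun A => a ∈ A) with hL
  set Q := L.image (fun A => X \ A) with hQ
  obtain ⟨K, rfl⟩ : ∃ K, k = K + 1 := ⟨k - 1, by omega⟩
  have hX := hF.1
  have hPQ : P.card + Q.card ≤ F.card := by
    have h1 : Q.card ≤ L.card := card_image_le
    have h2 : L.card + P.card = F.card := card_filter_add_card_filter_not _
    omega
  have hcov : ∀ w < K + 1, ∀ p q : ℝ, p + q = 1 → 0 < p → 0 < q →
      1 ≤ ((P.filter fun A => hgt P A = w).card : ℝ) * p ^ w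
        + ((Q.filter fun A => hgt Q A = K - w).card : ℝ) * q ^ (K - w) := by
    intro w hw p q hpq hp hq
    apply cover (X \ {a, b}) _ _ w (K - w) p q hpq hp hq
    · intro A hA
      rw [mem_filter] at hA
      refine ⟨?_, hA.2 ▸ hgt_le_card P A⟩
      have hAF := mem_filter.1 hA.1
      intro x hx
      simp only [mem_sdiff, mem_insert, mem_singleton, not_or]
      refine ⟨hX _ hAF.1 hx, ?_, ?_⟩
      · rintro rfl; exact hAF.2 hx
      · rintro rfl; exact hAF.2 ((hh _ hAF.1).2 hx)
    · intro T hT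
      rw [mem_filter] at hT
      refine ⟨?_, hT.2 ▸ hgt_le_card Q T⟩
      obtain ⟨A, hA, rfl⟩ := mem_image.1 hT.1
      have hAF := mem_filter.1 hA
      apply sdiff_subset_sdiff Subset.rfl
      intro x hx
      rcases mem_insert.1 hx with rfl | hx
      · exact hAF.2
      · rw [mem_singleton.1 hx]; exact (hh _ hAF.1).1 hAF.2
    · intro S hS
      rcases struct (K+1) X F hF a b ha hab hh w hw S hS with ⟨A, hA, h1, h2⟩ | ⟨A, hA, h1, h2⟩
      · left; exact ⟨A, mem_filter.2 ⟨hA, h1⟩, h2⟩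
      · right; exact ⟨A, mem_filter.2 ⟨hA, h1⟩, h2⟩
  obtain ⟨N, w0, hNw, hN1, hN2⟩ := exists_N K (by omega)
  have hKr : (496:ℝ) ≤ K := by exact_mod_cast (by omega : 496 ≤ K)
  have hNwr : 2 * (w0:ℝ) + N = K + 1 := by exact_mod_cast hNw
  have hpoly := sum_poly K N hKr hN1 hN2
  let f : ℕ → ℕ := fun w => (P.filter fun A => hgt P A = w).card
    + (Q.filter fun A => hgt Q A = K - w).card
  have hsum : ∑ w ∈ range (K+1), f w ≤ F.card := by
    refine le_trans ?_ hPQ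
    simp only [f]
    rw [sum_add_distrib]
    refine add_le_add (sum_levels P (hgt P) (K+1)) ?_
    have h3 := sum_range_reflect (fun w => (Q.filter fun A => hgt Q A = w).card) (K+1)
    simp only [Nat.add_sub_cancel] at h3
    rw [h3]
    exact sum_levels Q (hgt Q) (K+1)
  have hsub : ∑ j ∈ range N, f (w0 + j) ≤ ∑ w ∈ range (K+1), f w := by
    rw [sum_range_add_eq' f w0 N]
    apply sum_le_sum_of_subset
    intro x hx
    rw [mem_Ico] at hx
    rw [mem_range]; omega
  have hlev : ∀ j ∈ range N, 2 ^ ((K:ℝ)/2) * (1 - 0.94 * ((j:ℝ) - (N-1)/2)^2/K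
      + (0.94 * ((j:ℝ) - (N-1)/2)^2/K)^2/4) ≤ (f (w0 + j) : ℝ) := by
    intro j hj
    rw [mem_range] at hj
    have hjr : (j:ℝ) + 1 ≤ N := by exact_mod_cast hj
    have hj0 : (0:ℝ) ≤ j := by positivity
    simp only [f]
    push_cast
    apply level_bound K _ _ _ (w0 + j) (K - (w0 + j)) hKr ?_ ?_ ?_ (by positivity) (by positivity)
      (hcov (w0 + j) (by omega))
    · have hs2 : √(K:ℝ)^2 = K := Real.sq_sqrt (by linarith)
      have : |(j:ℝ) - (N-1)/2| ≤ 1.25 * √(K:ℝ) := by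
        rw [abs_le]; constructor <;> linarith
      calc ((j:ℝ) - (N-1)/2)^2 = |(j:ℝ) - (N-1)/2|^2 := (sq_abs _).symm
        _ ≤ (1.25 * √(K:ℝ))^2 := by gcongr
        _ = 1.5625 * K := by rw [mul_pow, hs2]; norm_num
    · push_cast; linarith
    · rw [Nat.cast_sub (by omega)]; push_cast; linarith
  have htot : 2 ^ ((K:ℝ)/2) * ∑ j ∈ range N, (1 - 0.94 * ((j:ℝ) - (N-1)/2)^2/K
      + (0.94 * ((j:ℝ) - (N-1)/2)^2/K)^2/4) ≤ (F.card : ℝ) := by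
    rw [mul_sum]
    refine (sum_le_sum hlev).trans ?_
    exact_mod_cast hsub.trans hsum
  refine lt_of_lt_of_le ?_ htot
  have e2 : (2:ℝ) ^ (((K+1:ℕ):ℝ)/2) = 2 ^ ((K:ℝ)/2) * √2 := by
    rw [Real.sqrt_eq_rpow, ← Real.rpow_add (by norm_num)]
    congr 1; push_cast; ring
  rw [e2]
  push_cast
  have hpos : (0:ℝ) < 2 ^ ((K:ℝ)/2) := by positivity
  rw [mul_left_comm]
  exact mul_lt_mul_of_pos_left hpoly hpos
end

section
/- For every integer k ≥ 7 and every integer n > 2^{2^{k-1}}, every saturated k-Sperner system F ⊆ P([n]) satisfies |F| ≥ 2^{k/2 + (1/2)·log₂ k − 1.66} (equivalently, |F| ≥ 2^{−1.66} · √k · 2^{k/2}). -/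
open Finset

lemma lb_rank (S : Finset (Finset ℕ)) : ∃ r : Finset ℕ → ℕ, (∀ B, r B ≤ B.card) ∧
    ∀ (m : ℕ) (C : ℕ → Finset ℕ), (∀ i j, i < j → j < m → C i ⊂ C j) → (∀ i < m, C i ∈ S) →
      ∀ a < m, ∃ B ∈ S, r B = a ∧ ∃ i < m, B ⊆ C i := by
  classical
  let f : (B : Finset ℕ) → ((C : Finset ℕ) → C ⊂ B → ℕ) → ℕ := fun B ih =>
    (B.ssubsets.attach).sup fun C => if C.1 ∈ S then ih C.1 (Finset.mem_ssubsets.1 C.2) + 1 else 0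
  let r : Finset ℕ → ℕ := fun B => Finset.strongInduction f B
  have hr : ∀ B, r B = (B.ssubsets).sup fun C => if C ∈ S then r C + 1 else 0 := by
    intro B
    have h1 : r B = f B (fun C _ => r C) := Finset.strongInduction_eq f B
    rw [h1]
    exact Finset.sup_attach B.ssubsets (fun C => if C ∈ S then r C + 1 else 0)
  have hcard : ∀ B, r B ≤ B.card := by
    intro B
    induction B using Finset.strongInduction with
    | H B ih =>
      rw [hr]
      refine Finset.sup_le fun C hC => ?_
      have hC' := Finset.mem_ssubsets.1 hC
      have := ih C hC'
      have := Finset.card_lt_card hC'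
      split_ifs <;> omega
  have hmono : ∀ B C, C ∈ S → C ⊂ B → r C + 1 ≤ r B := by
    intro B C hC hCB
    rw [hr B]
    have := Finset.le_sup (f := fun C => if C ∈ S then r C + 1 else 0)
      (Finset.mem_ssubsets.2 hCB)
    simpa [hC] using this
  have hdesc : ∀ B, B ∈ S → ∀ a ≤ r B, ∃ B' ∈ S, r B' = a ∧ B' ⊆ B := by
    intro B
    induction B using Finset.strongInduction with
    | H B ih =>
      intro hB a ha
      rcases ha.eq_or_lt with h | h
      · exact ⟨B, hB, h.symm, subset_rfl⟩
      · have h2 := h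
        rw [hr B, Finset.lt_sup_iff] at h2
        obtain ⟨C, hC, hlt⟩ := h2
        have hC' := Finset.mem_ssubsets.1 hC
        by_cases hCS : C ∈ S
        · simp only [hCS, if_true] at hlt
          obtain ⟨B', h1, h3, h4⟩ := ih C hC' hCS a (by omega)
          exact ⟨B', h1, h3, h4.trans hC'.1⟩
        · simp [hCS] at hlt
  refine ⟨r, hcard, ?_⟩
  intro m C hC hCS a ham
  have hge : ∀ i, i < m → i ≤ r (C i) := by
    intro i
    induction i with
    | zero => intro _; omega
    | succ i ih =>
      intro hi
      have := ih (by omega)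
      have := hmono (C (i+1)) (C i) (hCS i (by omega)) (hC i (i+1) (by omega) hi)
      omega
  obtain ⟨B, h1, h2, h3⟩ := hdesc (C a) (hCS a ham) a (hge a ham)
  exact ⟨B, h1, h2, a, ham, h3⟩

lemma lb_down (Y B : Finset ℕ) (hB : B ⊆ Y) (p q : ℝ) (hpq : p + q = 1) :
    ∑ A ∈ (Y \ B).powerset, p ^ A.card * q ^ (Y.card - A.card) = q ^ B.card := by
  have hc : Y.card = (Y \ B).card + B.card := by
    rw [Finset.card_sdiff_add_card_eq_card hB]
  have : ∀ A ∈ (Y \ B).powerset, p ^ A.card * q ^ (Y.card - A.card) =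
      (p ^ A.card * q ^ ((Y \ B).card - A.card)) * q ^ B.card := by
    intro A hA
    have := Finset.card_le_card (Finset.mem_powerset.1 hA)
    rw [mul_assoc, ← pow_add]
    congr 2
    omega
  rw [Finset.sum_congr rfl this, ← Finset.sum_mul, Finset.sum_pow_mul_eq_add_pow, hpq]
  simp

lemma lb_up (Y B : Finset ℕ) (hB : B ⊆ Y) (p q : ℝ) (hpq : p + q = 1) :
    ∑ A ∈ Y.powerset.filter (fun A => B ⊆ A), p ^ A.card * q ^ (Y.card - A.card)
      = p ^ B.card := by
  rw [← lb_down Y B hB q p (by linarith)]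
  refine Finset.sum_bij' (fun A _ => Y \ A) (fun A _ => Y \ A) ?_ ?_ ?_ ?_ ?_
  · intro A hA
    simp only [Finset.mem_filter, Finset.mem_powerset] at hA ⊢
    exact Finset.sdiff_subset_sdiff subset_rfl hA.2
  · intro A hA
    simp only [Finset.mem_filter, Finset.mem_powerset] at hA ⊢
    refine ⟨Finset.sdiff_subset, fun z hz => ?_⟩
    rw [Finset.mem_sdiff]
    exact ⟨hB hz, fun h => (Finset.mem_sdiff.1 (hA h)).2 hz⟩
  · intro A hA
    simp only [Finset.mem_filter, Finset.mem_powerset] at hA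
    simp [Finset.sdiff_sdiff_eq_self hA.1]
  · intro A hA
    have := (Finset.mem_powerset.1 hA).trans Finset.sdiff_subset
    simp [Finset.sdiff_sdiff_eq_self this]
  · intro A hA
    simp only [Finset.mem_filter, Finset.mem_powerset] at hA
    have h1 := Finset.card_sdiff_add_card_eq_card hA.1
    have h2 : Y.card - A.card = (Y \ A).card := by omega
    have h3 : Y.card - (Y \ A).card = A.card := by omega
    rw [h3, h2, mul_comm]

lemma lb_cover (Y : Finset ℕ) (P Q : Finset (Finset ℕ)) (a b : ℕ) (p q : ℝ)
    (hp : 0 ≤ p) (hq : 0 ≤ q) (hpq : p + q = 1)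
    (hP : ∀ B ∈ P, B ⊆ Y ∧ a ≤ B.card) (hQ : ∀ B ∈ Q, B ⊆ Y ∧ b ≤ B.card)
    (hc : ∀ A ⊆ Y, (∃ B ∈ P, B ⊆ A) ∨ (∃ B ∈ Q, B ⊆ Y \ A)) :
    1 ≤ P.card * p ^ a + Q.card * q ^ b := by
  classical
  set w : Finset ℕ → ℝ := fun A => p ^ A.card * q ^ (Y.card - A.card) with hw
  have hw0 : ∀ A, 0 ≤ w A := fun A => by positivity
  have h1 : ∑ A ∈ Y.powerset, w A = 1 := by
    simp only [hw]
    rw [Finset.sum_pow_mul_eq_add_pow, hpq, one_pow]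
  have hsub : Y.powerset ⊆ (P.biUnion fun B => Y.powerset.filter (fun A => B ⊆ A)) ∪
      (Q.biUnion fun B => (Y \ B).powerset) := by
    intro A hA
    have hA' := Finset.mem_powerset.1 hA
    rw [Finset.mem_union, Finset.mem_biUnion, Finset.mem_biUnion]
    rcases hc A hA' with ⟨B, hB, hBA⟩ | ⟨B, hB, hBA⟩
    · exact Or.inl ⟨B, hB, Finset.mem_filter.2 ⟨hA, hBA⟩⟩
    · refine Or.inr ⟨B, hB, Finset.mem_powerset.2 fun z hz => ?_⟩
      exact Finset.mem_sdiff.2 ⟨hA' hz, fun h => (Finset.mem_sdiff.1 (hBA h)).2 hz⟩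
  have hbU : ∀ (R : Finset (Finset ℕ)) (g : Finset ℕ → Finset (Finset ℕ)),
      ∑ A ∈ R.biUnion g, w A ≤ ∑ B ∈ R, ∑ A ∈ g B, w A := by
    intro R g
    induction R using Finset.induction_on with
    | empty => simp
    | insert B R hB ih =>
      rw [Finset.biUnion_insert, Finset.sum_insert hB]
      have := Finset.sum_union_inter (s₁ := g B) (s₂ := R.biUnion g) (f := w)
      have := Finset.sum_nonneg (s := g B ∩ R.biUnion g) (f := w) (fun A _ => hw0 A)
      linarith
  have h2 := Finset.sum_le_sum_of_subset_of_nonneg hsub (f := w) (fun A _ _ => hw0 A)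
  have h3 := Finset.sum_union_inter (s₁ := P.biUnion fun B => Y.powerset.filter (fun A => B ⊆ A))
    (s₂ := Q.biUnion fun B => (Y \ B).powerset) (f := w)
  have h4 := Finset.sum_nonneg (s := (P.biUnion fun B => Y.powerset.filter (fun A => B ⊆ A)) ∩
    (Q.biUnion fun B => (Y \ B).powerset)) (f := w) (fun A _ => hw0 A)
  have h5 := hbU P (fun B => Y.powerset.filter (fun A => B ⊆ A))
  have h6 := hbU Q (fun B => (Y \ B).powerset)
  have h7 : ∑ B ∈ P, ∑ A ∈ Y.powerset.filter (fun A => B ⊆ A), w A ≤ P.card * p ^ a := by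
    rw [← nsmul_eq_mul]
    refine Finset.sum_le_card_nsmul _ _ _ fun B hB => ?_
    rw [lb_up Y B (hP B hB).1 p q hpq]
    exact pow_le_pow_of_le_one hp (by linarith) (hP B hB).2
  have h8 : ∑ B ∈ Q, ∑ A ∈ (Y \ B).powerset, w A ≤ Q.card * q ^ b := by
    rw [← nsmul_eq_mul]
    refine Finset.sum_le_card_nsmul _ _ _ fun B hB => ?_
    rw [lb_down Y B (hQ B hB).1 p q hpq]
    exact pow_le_pow_of_le_one hq (by linarith) (hQ B hB).2
  linarith

lemma lb_prob (s l : ℝ) (hl : 0 ≤ l) (a b m : ℕ) (hm : a + b = m) (hm0 : 0 < m)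
    (h : ∀ p q : ℝ, 0 ≤ p → 0 ≤ q → p + q = 1 → 1 ≤ s * p ^ a + l * q ^ b) :
    (2 : ℝ) ^ (2 * (a : ℝ) * b / m) ≤ s + l := by
  have hmR : (0 : ℝ) < m := by exact_mod_cast hm0
  have hab : (a : ℝ) + b = m := by exact_mod_cast hm
  set p : ℝ := (2 : ℝ) ^ (-(2 * (b : ℝ) / m)) with hp
  set q' : ℝ := (2 : ℝ) ^ (-(2 * (a : ℝ) / m)) with hq'
  have hp0 : 0 < p := by positivity
  have hq0 : 0 < q' := by positivity
  have hp1 : p ≤ 1 := by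
    apply Real.rpow_le_one_of_one_le_of_nonpos (by norm_num)
    have : 0 ≤ 2 * (b : ℝ) / m := by positivity
    linarith
  have hpq : p * q' = 1 / 4 := by
    rw [hp, hq', ← Real.rpow_add (by norm_num)]
    have : -(2 * (b : ℝ) / m) + -(2 * (a : ℝ) / m) = -2 := by
      field_simp
      linarith
    rw [this, Real.rpow_neg (by norm_num)]
    norm_num
  have hsum : 1 ≤ p + q' := by
    nlinarith [sq_nonneg (p - q')]
  have h1 := h p (1 - p) hp0.le (by linarith) (by ring)
  have h2 : (1 - p) ^ b ≤ q' ^ b := pow_le_pow_left₀ (by linarith) (by linarith) b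
  have e1 : p ^ a = (2 : ℝ) ^ (-(2 * (a : ℝ) * b / m)) := by
    rw [hp, ← Real.rpow_natCast, ← Real.rpow_mul (by norm_num)]
    congr 1; ring
  have e2 : q' ^ b = (2 : ℝ) ^ (-(2 * (a : ℝ) * b / m)) := by
    rw [hq', ← Real.rpow_natCast, ← Real.rpow_mul (by norm_num)]
    congr 1; ring
  have h3 : 1 ≤ (s + l) * (2 : ℝ) ^ (-(2 * (a : ℝ) * b / m)) := by
    have := mul_le_mul_of_nonneg_left h2 hl
    rw [e2] at this
    rw [e1] at h1
    linarith
  rw [Real.rpow_neg (by norm_num), ← div_eq_mul_inv, le_div_iff₀ (by positivity)] at h3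
  linarith

lemma lb_struct (k n : ℕ) (hk : 1 ≤ k) (F : Finset (Finset ℕ))
    (hF : IsSatKSperner (Finset.Icc 1 n) F k) (x y : ℕ) (hx : x ∈ Finset.Icc 1 n)
    (hy : y ∈ Finset.Icc 1 n) (hxy : x ≠ y) (hh : ∀ S ∈ F, x ∈ S ↔ y ∈ S) :
    ∃ f g : ℕ → ℕ, (∀ I ⊆ Finset.range k, ∑ a ∈ I, (f a + g (k - 1 - a)) ≤ F.card) ∧
      ∀ a b, a + b = k - 1 → ∀ p q : ℝ, 0 ≤ p → 0 ≤ q → p + q = 1 →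
        1 ≤ (f a : ℝ) * p ^ a + (g b : ℝ) * q ^ b := by
  classical
  obtain ⟨hsub, hno, hsat⟩ := hF
  set X := Finset.Icc 1 n
  set Y := (X.erase x).erase y with hY
  set S := F.filter (fun A => x ∉ A) with hS
  set L := (F.filter (fun A => x ∈ A)).image (fun A => X \ A) with hL
  obtain ⟨r, hr1, hr2⟩ := lb_rank S
  obtain ⟨r', hr1', hr2'⟩ := lb_rank L
  have hSY : ∀ B ∈ S, B ⊆ Y := by
    intro B hB z hz
    rw [hS, Finset.mem_filter] at hB
    simp only [hY, Finset.mem_erase]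
    refine ⟨?_, ?_, hsub B hB.1 hz⟩
    · rintro rfl; exact hB.2 ((hh B hB.1).2 hz)
    · rintro rfl; exact hB.2 hz
  have hLY : ∀ B ∈ L, B ⊆ Y := by
    intro B hB z hz
    rw [hL, Finset.mem_image] at hB
    obtain ⟨A, hA, rfl⟩ := hB
    rw [Finset.mem_filter] at hA
    rw [Finset.mem_sdiff] at hz
    simp only [hY, Finset.mem_erase]
    refine ⟨?_, ?_, hz.1⟩
    · rintro rfl; exact hz.2 ((hh A hA.1).1 hA.2)
    · rintro rfl; exact hz.2 hA.2
  refine ⟨fun a => (S.filter (fun B => r B = a)).card, fun b => (L.filter (fun B => r' B = b)).card,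
    ?_, ?_⟩
  · intro I hI
    rw [Finset.sum_add_distrib]
    have h1 : ∑ a ∈ I, (S.filter (fun B => r B = a)).card ≤ S.card := by
      rw [Finset.sum_card_fiberwise_eq_card_filter]
      exact Finset.card_filter_le _ _
    have h2 : ∑ a ∈ I, (L.filter (fun B => r' B = k - 1 - a)).card ≤ L.card := by
      calc _ ≤ ∑ a ∈ I, (L.filter (fun B => k - 1 - r' B = a)).card := by
            refine Finset.sum_le_sum fun a ha => Finset.card_le_card fun B hB => ?_
            have := Finset.mem_range.1 (hI ha)
            rw [Finset.mem_filter] at hB ⊢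
            exact ⟨hB.1, by omega⟩
        _ ≤ _ := by
            rw [Finset.sum_card_fiberwise_eq_card_filter]
            exact Finset.card_filter_le _ _
    have h3 : L.card ≤ (F.filter (fun A => x ∈ A)).card := Finset.card_image_le
    have h4 := Finset.card_filter_add_card_filter_not (s := F) (fun A => x ∈ A)
    have h5 : S.card = (F.filter (fun A => ¬ x ∈ A)).card := rfl
    linarith
  · intro a b hab p q hp hq hpq
    refine lb_cover Y _ _ a b p q hp hq hpq ?_ ?_ ?_
    · intro B hB
      rw [Finset.mem_filter] at hB
      exact ⟨hSY B hB.1, hB.2 ▸ hr1 B⟩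
    · intro B hB
      rw [Finset.mem_filter] at hB
      exact ⟨hLY B hB.1, hB.2 ▸ hr1' B⟩
    · intro A hA
      have hyA : y ∉ A := fun h => by simpa [hY] using hA h
      have hT : insert x A ∉ F := by
        intro h
        have := (hh _ h).1 (Finset.mem_insert_self _ _)
        rw [Finset.mem_insert] at this
        rcases this with h | h
        · exact hxy h.symm
        · exact hyA h
      have hTX : insert x A ⊆ X := by
        refine Finset.insert_subset hx (hA.trans ?_)
        exact (Finset.erase_subset _ _).trans (Finset.erase_subset _ _)
      obtain ⟨C, hCm, hCF⟩ := hsat _ hTX hT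
      have hex : ∃ i, C i = insert x A := by
        by_contra hcon
        push Not at hcon
        exact hno ⟨C, hCm, fun i => (Finset.mem_insert.1 (hCF i)).resolve_left (hcon i)⟩
      obtain ⟨i, hi⟩ := hex
      have hCF' : ∀ j, j ≠ i → C j ∈ F := by
        intro j hj
        refine (Finset.mem_insert.1 (hCF j)).resolve_left fun h => hj ?_
        exact hCm.injective (h.trans hi.symm)
      have hlow : ∀ j, j < i → C j ∈ S ∧ C j ⊆ A := by
        intro j hj
        have hjF := hCF' j hj.ne
        have hsubT : C j ⊆ insert x A := hi ▸ (hCm hj).le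
        have hyj : y ∉ C j := by
          intro h
          rcases Finset.mem_insert.1 (hsubT h) with h | h
          · exact hxy h.symm
          · exact hyA h
        have hxj : x ∉ C j := fun h => hyj ((hh _ hjF).1 h)
        exact ⟨Finset.mem_filter.2 ⟨hjF, hxj⟩, (Finset.subset_insert_iff_of_notMem hxj).1 hsubT⟩
      have hhigh : ∀ j, i < j → X \ C j ∈ L ∧ X \ C j ⊆ Y \ A := by
        intro j hj
        have hjF := hCF' j hj.ne'
        have hsubT : insert x A ⊆ C j := hi ▸ (hCm hj).le
        have hmem : X \ C j ∈ L := by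
          refine Finset.mem_image.2 ⟨C j, Finset.mem_filter.2 ⟨hjF, ?_⟩, rfl⟩
          exact hsubT (Finset.mem_insert_self _ _)
        refine ⟨hmem, fun z hz => Finset.mem_sdiff.2 ⟨hLY _ hmem hz, fun h => ?_⟩⟩
        exact (Finset.mem_sdiff.1 hz).2 (hsubT (Finset.mem_insert_of_mem h))
      rcases Nat.lt_or_ge a i.1 with hai | hai
      · left
        obtain ⟨B, hB, hBr, j, hj, hBj⟩ := hr2 i.1 (fun j => C (Fin.ofNat (k+1) j))
          (by
            intro u v huv hv
            apply hCm
            rw [Fin.lt_def]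
            simp only [Fin.val_ofNat]
            rw [Nat.mod_eq_of_lt (by omega), Nat.mod_eq_of_lt (by omega)]
            exact huv)
          (by
            intro u hu
            refine (hlow _ ?_).1
            rw [Fin.lt_def]
            simp only [Fin.val_ofNat]
            rw [Nat.mod_eq_of_lt (by omega)]
            exact hu) a hai
        refine ⟨B, Finset.mem_filter.2 ⟨hB, hBr⟩, hBj.trans (hlow _ ?_).2⟩
        rw [Fin.lt_def]
        simp only [Fin.val_ofNat]
        rw [Nat.mod_eq_of_lt (by omega)]
        exact hj
      · right
        have hik := i.2
        obtain ⟨B, hB, hBr, j, hj, hBj⟩ := hr2' (k - i.1) (fun j => X \ C (Fin.ofNat (k+1) (k - j)))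
          (by
            intro u v huv hv
            have hlt : C (Fin.ofNat (k+1) (k - v)) ⊂ C (Fin.ofNat (k+1) (k - u)) := by
              apply hCm
              rw [Fin.lt_def]
              simp only [Fin.val_ofNat]
              rw [Nat.mod_eq_of_lt (by omega), Nat.mod_eq_of_lt (by omega)]
              omega
            have huX : C (Fin.ofNat (k+1) (k - u)) ⊆ X := by
              refine hsub _ (hCF' _ ?_)
              intro h
              have := congrArg Fin.val h
              simp only [Fin.val_ofNat] at this
              rw [Nat.mod_eq_of_lt (by omega)] at this
              omega
            refine ⟨Finset.sdiff_subset_sdiff subset_rfl hlt.1, fun hback => hlt.2 fun z hz => ?_⟩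
            by_contra hzv
            exact (Finset.mem_sdiff.1 (hback (Finset.mem_sdiff.2 ⟨huX hz, hzv⟩))).2 hz)
          (by
            intro u hu
            refine (hhigh _ ?_).1
            rw [Fin.lt_def]
            simp only [Fin.val_ofNat]
            rw [Nat.mod_eq_of_lt (by omega)]
            omega) b (by omega)
        refine ⟨B, Finset.mem_filter.2 ⟨hB, hBr⟩, hBj.trans (hhigh _ ?_).2⟩
        rw [Fin.lt_def]
        simp only [Fin.val_ofNat]
        rw [Nat.mod_eq_of_lt (by omega)]
        omega

lemma lb_const : (2 : ℝ) ^ (-0.16 : ℝ) ≤ 0.9 := by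
  have h : ((2 : ℝ) ^ (-0.16 : ℝ)) ^ 25 ≤ 0.9 ^ 25 := by
    rw [← Real.rpow_natCast, ← Real.rpow_mul (by norm_num)]
    have : (-0.16 : ℝ) * ((25 : ℕ) : ℝ) = -((4 : ℕ) : ℝ) := by norm_num
    rw [this, Real.rpow_neg (by norm_num), Real.rpow_natCast]
    norm_num
  exact le_of_pow_le_pow_left₀ (by norm_num) (by norm_num) h

lemma lb_target (k m : ℕ) (hk : k = m + 1) :
    (2 : ℝ) ^ ((k : ℝ) / 2 + (1 / 2) * Real.logb 2 k - 1.66)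
      ≤ 0.9 * √(m + 1) * (2 : ℝ) ^ ((m : ℝ) / 2 - 1) := by
  have hk0 : (0 : ℝ) < k := by rw [hk]; positivity
  have e : (k : ℝ) / 2 + (1 / 2) * Real.logb 2 k - 1.66
      = -0.16 + Real.logb 2 k * (1 / 2) + ((m : ℝ) / 2 - 1) := by
    rw [show (k : ℝ) = m + 1 by rw [hk]; push_cast; ring]; ring
  rw [e, Real.rpow_add (by norm_num), Real.rpow_add (by norm_num), Real.rpow_mul (by norm_num),
    Real.rpow_logb (by norm_num) (by norm_num) hk0, ← Real.sqrt_eq_rpow,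
    show (k : ℝ) = m + 1 by rw [hk]; push_cast; ring]
  gcongr
  exact lb_const

lemma lb_window (m : ℕ) (hm : 6 ≤ m) : ∃ I ⊆ Finset.range (m + 1),
    (∀ a ∈ I, (m : ℝ) / 2 - 1 ≤ 2 * (a : ℝ) * ((m - a : ℕ) : ℝ) / m) ∧
      √(2 * m) - 1 ≤ I.card := by
  have hmR : (6 : ℝ) ≤ m := by exact_mod_cast hm
  set t := √(2 * (m : ℝ)) with ht
  have ht2 : t ^ 2 = 2 * m := Real.sq_sqrt (by positivity)
  have ht0 : 0 ≤ t := Real.sqrt_nonneg _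
  have htm : t ≤ m := by nlinarith
  have hlo : 0 ≤ ((m : ℝ) - t) / 2 := by linarith
  have hhi : 0 ≤ ((m : ℝ) + t) / 2 := by linarith
  refine ⟨Finset.Icc ⌈((m : ℝ) - t) / 2⌉₊ ⌊((m : ℝ) + t) / 2⌋₊, ?_, ?_, ?_⟩
  · intro a ha
    have h := (Finset.mem_Icc.1 ha).2
    rw [Nat.le_floor_iff hhi] at h
    rw [Finset.mem_range, Nat.lt_succ_iff]
    have : (a : ℝ) ≤ m := by linarith
    exact_mod_cast this
  · intro a ha
    obtain ⟨h1, h2⟩ := Finset.mem_Icc.1 ha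
    rw [Nat.le_floor_iff hhi] at h2
    rw [Nat.ceil_le] at h1
    have ham : a ≤ m := by
      have : (a : ℝ) ≤ m := by linarith
      exact_mod_cast this
    rw [Nat.cast_sub ham, le_div_iff₀ (by linarith)]
    have : (2 * (a : ℝ) - m) ^ 2 ≤ t ^ 2 := by
      apply sq_le_sq'
      · linarith
      · linarith
    nlinarith
  · rw [Nat.card_Icc]
    have h1 := Nat.lt_floor_add_one (((m : ℝ) + t) / 2)
    have h2 := Nat.ceil_lt_add_one hlo
    have h3 : ⌊((m : ℝ) + t) / 2⌋₊ + 1 ≤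
      (⌊((m : ℝ) + t) / 2⌋₊ + 1 - ⌈((m : ℝ) - t) / 2⌉₊) + ⌈((m : ℝ) - t) / 2⌉₊ := by omega
    have h4 : ((⌊((m : ℝ) + t) / 2⌋₊ : ℝ) + 1) ≤
      ((⌊((m : ℝ) + t) / 2⌋₊ + 1 - ⌈((m : ℝ) - t) / 2⌉₊ : ℕ) : ℝ) + ⌈((m : ℝ) - t) / 2⌉₊ := by
      exact_mod_cast h3
    linarith

lemma lb_num (m : ℕ) (hm : 6 ≤ m) : 0.9 * √((m : ℝ) + 1) ≤ √(2 * m) - 1 := by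
  have hmR : (6 : ℝ) ≤ m := by exact_mod_cast hm
  set t := √(2 * (m : ℝ)) with ht
  have ht2 : t ^ 2 = 2 * m := Real.sq_sqrt (by positivity)
  have ht3 : 3.46 ≤ t := by
    apply Real.le_sqrt_of_sq_le
    linarith
  have : √((m : ℝ) + 1) ≤ (t - 1) / 0.9 := by
    apply Real.sqrt_le_iff.2
    constructor
    · apply div_nonneg <;> linarith
    · rw [div_pow, le_div_iff₀ (by norm_num)]
      nlinarith
  rw [le_div_iff₀ (by norm_num)] at this
  linarith

theorem lower_bound_166 (k n : ℕ) (hk : 7 ≤ k) (hn : 2 ^ 2 ^ (k - 1) < n)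
    (F : Finset (Finset ℕ)) (hF : IsSatKSperner (Finset.Icc 1 n) F k) :
    (2 : ℝ) ^ ((k : ℝ) / 2 + (1 / 2) * Real.logb 2 k - 1.66) ≤ F.card := by
  classical
  obtain ⟨m, rfl⟩ : ∃ m, k = m + 1 := ⟨k - 1, by omega⟩
  have hm : 6 ≤ m := by omega
  refine (lb_target (m + 1) m rfl).trans ?_
  simp only [Nat.add_sub_cancel] at hn
  rcases Nat.lt_or_ge (2 ^ m) F.card with hcard | hcard
  · have h1 : ((2 : ℝ) ^ m) ≤ F.card := by exact_mod_cast hcard.le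
    refine le_trans ?_ h1
    have h2 : √((m : ℝ) + 1) ≤ (2 : ℝ) ^ ((m : ℝ) / 2) := by
      rw [Real.sqrt_le_iff]
      refine ⟨by positivity, ?_⟩
      rw [← Real.rpow_natCast, ← Real.rpow_mul (by norm_num)]
      have : (m : ℝ) / 2 * ((2 : ℕ) : ℝ) = (m : ℕ) := by push_cast; ring
      rw [this, Real.rpow_natCast]
      exact_mod_cast Nat.lt_two_pow_self
    have h3 : (2 : ℝ) ^ m = (2 : ℝ) ^ ((m : ℝ) / 2) * (2 : ℝ) ^ ((m : ℝ) / 2) := by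
      rw [← Real.rpow_add (by norm_num), ← Real.rpow_natCast]
      congr 1; ring
    rw [h3, Real.rpow_sub (by norm_num), Real.rpow_one]
    have h4 : (0 : ℝ) < (2 : ℝ) ^ ((m : ℝ) / 2) := by positivity
    have h5 := Real.sqrt_nonneg ((m : ℝ) + 1)
    have h6 : 0.9 * √((m : ℝ) + 1) ≤ (2 : ℝ) ^ ((m : ℝ) / 2) := by linarith
    exact mul_le_mul h6 (by linarith) (by positivity) h4.le
  · have hpig : F.powerset.card < (Finset.Icc 1 n).card := by
      rw [Finset.card_powerset, Nat.card_Icc, Nat.add_sub_cancel]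
      exact (Nat.pow_le_pow_right (by norm_num) hcard).trans_lt hn
    obtain ⟨x, hx, y, hy, hxy, hsig⟩ := Finset.exists_ne_map_eq_of_card_lt_of_maps_to hpig
      (f := fun x => F.filter (fun S => x ∈ S))
      (fun x _ => Finset.mem_powerset.2 (Finset.filter_subset _ _))
    have hh : ∀ S ∈ F, x ∈ S ↔ y ∈ S := by
      intro S hS
      have := Finset.ext_iff.1 hsig S
      simpa [hS] using this
    obtain ⟨f, g, hfg, hpr⟩ := lb_struct (m + 1) n (by omega) F hF x y hx hy hxy hh
    simp only [Nat.add_sub_cancel] at hfg hpr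
    obtain ⟨I, hI, hIa, hIc⟩ := lb_window m hm
    have h1 : (∑ a ∈ I, ((f a : ℝ) + g (m - a))) ≤ F.card := by exact_mod_cast hfg I hI
    refine le_trans ?_ h1
    have h2 : I.card • ((2 : ℝ) ^ ((m : ℝ) / 2 - 1)) ≤ ∑ a ∈ I, ((f a : ℝ) + g (m - a)) := by
      refine Finset.card_nsmul_le_sum _ _ _ fun a ha => ?_
      have ham := Finset.mem_range.1 (hI ha)
      refine le_trans ?_ (lb_prob (f a) (g (m - a)) (by positivity) a (m - a) m
        (by omega) (by omega) (hpr a (m - a) (by omega)))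
      exact Real.rpow_le_rpow_of_exponent_le (by norm_num) (hIa a ha)
    refine le_trans ?_ h2
    rw [nsmul_eq_mul]
    have := lb_num m hm
    gcongr
    linarith
end

section
/- Let k ≥ 2 and let F ⊆ P(X) be a saturated k-Sperner system on a finite set X with |X| = n > 2^{|F|}, of minimum cardinality among all saturated k-Sperner systems in P(X), with homogeneous atom H and canonical decomposition (A_i)_{i=0}^{k-1}. Then every member of A₁^small is a singleton, |A₁^small| ≥ k−2, and |A₁^large| = 1. Symmetrically, every member of A_{k-2}^large has cardinality n−1, |A_{k-2}^large| ≥ k−2, and |A_{k-2}^small| = 1. -/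
open Finset

/-- There is a chain of `m+1` members of `F` with top element `A`. -/
def HC {α : Type*} [DecidableEq α] (F : Finset (Finset α)) (m : ℕ) (A : Finset α) : Prop :=
  ∃ c : ℕ → Finset α, (∀ i < m, c i ⊂ c (i + 1)) ∧ (∀ i ≤ m, c i ∈ F) ∧ c m = A

theorem HC.base {α : Type*} [DecidableEq α] {F : Finset (Finset α)} {A : Finset α}
    (h : A ∈ F) : HC F 0 A :=
  ⟨fun _ => A, by simp, by simp [h], rfl⟩

theorem HC.step {α : Type*} [DecidableEq α] {F : Finset (Finset α)} {A B : Finset α} {m : ℕ}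
    (h : HC F m A) (hAB : A ⊂ B) (hB : B ∈ F) : HC F (m + 1) B := by
  obtain ⟨c, h1, h2, h3⟩ := h
  refine ⟨fun i => if i ≤ m then c i else B, ?_, ?_, by simp⟩
  · intro i hi
    rcases Nat.lt_or_ge i m with h | h
    · have : i ≤ m := h.le
      have h' : i + 1 ≤ m := h
      simp only [this, h', if_true]
      exact h1 i h
    · have : i = m := by omega
      subst this
      simpa [h3] using hAB
  · intro i hi
    by_cases h : i ≤ m
    · simp only [h, if_true]; exact h2 i h
    · simp only [h, if_false]; exact hB

theorem HC.hasChain {α : Type*} [DecidableEq α] {F : Finset (Finset α)} {A : Finset α} {m : ℕ}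
    (h : HC F m A) : HasChainOfLen F (m + 1) := by
  obtain ⟨c, h1, h2, h3⟩ := h
  refine ⟨fun i => c i, ?_, fun i => h2 i (by omega)⟩
  rw [Fin.strictMono_iff_lt_succ]
  intro i
  simpa using h1 i i.2

/-- A layered sequence of saturated antichains. -/
structure Dec {α : Type*} [DecidableEq α] (X : Finset α) (D : ℕ → Finset (Finset α))
    (k : ℕ) : Prop where
  sub : ∀ i < k, ∀ A ∈ D i, A ⊆ X
  anti : ∀ i < k, ∀ A ∈ D i, ∀ B ∈ D i, A ⊆ B → A = B
  sat : ∀ i < k, ∀ S ⊆ X, ∃ A ∈ D i, A ⊆ S ∨ S ⊆ A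
  lay : ∀ i, i + 1 < k → ∀ A ∈ D (i + 1), ∃ B ∈ D i, B ⊂ A

theorem Dec.up {α : Type*} [DecidableEq α] {X : Finset α} {D : ℕ → Finset (Finset α)}
    {k : ℕ} (h : Dec X D k) (i : ℕ) (hi : i + 1 < k) (A : Finset α) (hA : A ∈ D i) :
    ∃ B ∈ D (i + 1), A ⊂ B := by
  obtain ⟨B, hB, hc⟩ := h.sat (i + 1) hi A (h.sub i (by omega) A hA)
  obtain ⟨C, hC, hCB⟩ := h.lay i hi B hB
  have key : ¬ B ⊆ A := by
    intro hBA
    have := h.anti i (by omega) C hC A hA (hCB.1.trans hBA)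
    subst this
    exact hCB.2 hBA
  rcases hc with hc | hc
  · exact absurd hc key
  · exact ⟨B, hB, hc, key⟩

theorem Dec.hc {α : Type*} [DecidableEq α] {X : Finset α} {D : ℕ → Finset (Finset α)}
    {k : ℕ} (h : Dec X D k) (G : Finset (Finset α)) (hG : ∀ i < k, D i ⊆ G) :
    ∀ i < k, ∀ A ∈ D i, HC G i A := by
  intro i
  induction i with
  | zero => intro hi A hA; exact HC.base (hG 0 hi hA)
  | succ i ih =>
    intro hi A hA
    obtain ⟨B, hB, hBA⟩ := h.lay i hi A hA
    exact (ih (by omega) B hB).step hBA (hG _ hi hA)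

theorem Dec.hc_up {α : Type*} [DecidableEq α] {X : Finset α} {D : ℕ → Finset (Finset α)}
    {k : ℕ} (h : Dec X D k) (G : Finset (Finset α)) (hG : ∀ i < k, D i ⊆ G) (m : ℕ) :
    ∀ d i, i + d + 1 = k → ∀ A ∈ D i, HC G (i + m) A → HasChainOfLen G (k + m) := by
  intro d
  induction d with
  | zero =>
    intro i hi A hA hc
    have := hc.hasChain
    rwa [show i + m + 1 = k + m by omega] at this
  | succ d ih =>
    intro i hi A hA hc
    obtain ⟨B, hB, hAB⟩ := h.up i (by omega) A hA
    refine ih (i + 1) (by omega) B hB ?_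
    have := hc.step hAB (hG _ (by omega) hB)
    rwa [show i + m + 1 = i + 1 + m by omega] at this

theorem Dec.isSat {α : Type*} [DecidableEq α] {X : Finset α} {D : ℕ → Finset (Finset α)}
    {k : ℕ} (hk : 1 ≤ k) (h : Dec X D k) :
    IsSatKSperner X ((Finset.range k).biUnion D) k := by
  refine ⟨?_, ?_, ?_⟩
  · intro A hA
    simp only [Finset.mem_biUnion, Finset.mem_range] at hA
    obtain ⟨i, hi, hA⟩ := hA
    exact h.sub i hi A hA
  · rintro ⟨c, hc, hm⟩
    simp only [Finset.mem_biUnion, Finset.mem_range] at hm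
    choose f hf hfm using hm
    have hninj : ¬ Function.Injective (fun i : Fin (k + 1) => (⟨f i, hf i⟩ : Fin k)) := by
      intro hinj
      have := Fintype.card_le_of_injective _ hinj
      simp at this
    apply hninj
    intro i j hij
    have hij' : f i = f j := by simpa using hij
    have h1 := hfm i
    have h2 := hfm j
    rw [hij'] at h1
    rcases le_total i j with hle | hle
    · exact hc.injective (h.anti _ (hf j) _ h1 _ h2 (hc.monotone hle))
    · exact (hc.injective (h.anti _ (hf j) _ h2 _ h1 (hc.monotone hle))).symm
  · intro S hS hSG
    simp only [Finset.mem_biUnion, Finset.mem_range, not_exists, not_and] at hSG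
    set G := insert S ((Finset.range k).biUnion D) with hGdef
    have hSG' : S ∈ G := Finset.mem_insert_self _ _
    have hG : ∀ i < k, D i ⊆ G := by
      intro i hi A hA
      exact Finset.mem_insert_of_mem (Finset.mem_biUnion.2 ⟨i, Finset.mem_range.2 hi, hA⟩)
    have hcmp : ∀ i < k, (∃ B ∈ D i, B ⊂ S) ∨ (∃ B ∈ D i, S ⊂ B) := by
      intro i hi
      obtain ⟨A, hA, hc⟩ := h.sat i hi S hS
      have hne : A ≠ S := fun e => hSG i hi (e ▸ hA)
      rcases hc with hc | hc
      · exact Or.inl ⟨A, hA, lt_of_le_of_ne hc hne⟩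
      · exact Or.inr ⟨A, hA, lt_of_le_of_ne hc hne.symm⟩
    have hcases : ∀ i < k, HasChainOfLen G (k + 1) ∨ ∃ B ∈ D i, B ⊂ S := by
      intro i
      induction i with
      | zero =>
        intro hi
        rcases hcmp 0 hi with h1 | ⟨B, hB, hSB⟩
        · exact Or.inr h1
        · left
          have h0 : HC G 1 B := (HC.base hSG').step hSB (hG 0 hi hB)
          exact h.hc_up G hG 1 (k - 1) 0 (by omega) B hB (by simpa using h0)
      | succ i ih =>
        intro hi
        rcases ih (by omega) with h1 | ⟨C, hC, hCS⟩
        · exact Or.inl h1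
        rcases hcmp (i + 1) hi with h1 | ⟨B, hB, hSB⟩
        · exact Or.inr h1
        · left
          have h0 := ((h.hc G hG i (by omega) C hC).step hCS hSG').step hSB (hG _ hi hB)
          exact h.hc_up G hG 1 (k - 1 - (i + 1)) (i + 1) (by omega) B hB h0
    rcases hcases (k - 1) (by omega) with h1 | ⟨B, hB, hBS⟩
    · exact h1
    · have := ((h.hc G hG (k - 1) (by omega) B hB).step hBS hSG').hasChain
      rwa [show k - 1 + 1 + 1 = k + 1 by omega] at this

/-- Complemented sequence. -/
def cDec {α : Type*} [DecidableEq α] (X : Finset α) (k : ℕ) (D : ℕ → Finset (Finset α))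
    (i : ℕ) : Finset (Finset α) :=
  (D (k - 1 - i)).image (fun A => X \ A)

theorem Dec.compl {α : Type*} [DecidableEq α] {X : Finset α} {D : ℕ → Finset (Finset α)}
    {k : ℕ} (h : Dec X D k) : Dec X (cDec X k D) k := by
  have inv : ∀ A ⊆ X, X \ (X \ A) = A := fun A hA => Finset.sdiff_sdiff_eq_self hA
  refine ⟨?_, ?_, ?_, ?_⟩
  · intro i hi A hA
    obtain ⟨B, hB, rfl⟩ := Finset.mem_image.1 hA
    exact Finset.sdiff_subset
  · intro i hi A hA A' hA' hs
    obtain ⟨B, hB, rfl⟩ := Finset.mem_image.1 hA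
    obtain ⟨B', hB', rfl⟩ := Finset.mem_image.1 hA'
    have hlt : k - 1 - i < k := by omega
    have h1 := h.sub _ hlt _ hB
    have h2 := h.sub _ hlt _ hB'
    have : B' ⊆ B := by
      rw [← inv B h1, ← inv B' h2]
      exact Finset.sdiff_subset_sdiff le_rfl hs
    rw [h.anti _ hlt _ hB' _ hB this]
  · intro i hi S hS
    obtain ⟨A, hA, hc⟩ := h.sat (k - 1 - i) (by omega) (X \ S) Finset.sdiff_subset
    refine ⟨X \ A, Finset.mem_image_of_mem _ hA, ?_⟩
    rcases hc with hc | hc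
    · right
      rw [← inv S hS]
      exact Finset.sdiff_subset_sdiff le_rfl hc
    · left
      rw [← inv S hS]
      exact Finset.sdiff_subset_sdiff le_rfl hc
  · intro i hi A hA
    obtain ⟨B, hB, rfl⟩ := Finset.mem_image.1 hA
    obtain ⟨C, hC, hBC⟩ := h.up (k - 1 - (i + 1)) (by omega) B hB
    rw [show k - 1 - (i + 1) + 1 = k - 1 - i by omega] at hC
    refine ⟨X \ C, Finset.mem_image_of_mem _ hC, Finset.sdiff_subset_sdiff le_rfl hBC.1, ?_⟩
    intro hs
    apply hBC.2
    have h1 := h.sub _ (by omega) _ hB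
    have h2 := h.sub _ (by omega) _ hC
    rw [← inv B h1, ← inv C h2]
    exact Finset.sdiff_subset_sdiff le_rfl hs

theorem cDec_sum {α : Type*} [DecidableEq α] (X : Finset α) (k : ℕ)
    (D : ℕ → Finset (Finset α)) :
    ∑ i ∈ Finset.range k, (cDec X k D i).card ≤ ∑ i ∈ Finset.range k, (D i).card := by
  rw [← Finset.sum_range_reflect (fun i => (D i).card) k]
  exact Finset.sum_le_sum fun i _ => Finset.card_image_le

theorem Dec.card_up {α : Type*} [DecidableEq α] {X : Finset α} {D : ℕ → Finset (Finset α)}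
    {k : ℕ} (h : Dec X D k) :
    ∀ d i, i + d + 1 = k → ∀ A ∈ D i, d + A.card ≤ X.card := by
  intro d
  induction d with
  | zero => intro i hi A hA; simpa using Finset.card_le_card (h.sub i (by omega) A hA)
  | succ d ih =>
    intro i hi A hA
    obtain ⟨B, hB, hAB⟩ := h.up i (by omega) A hA
    have := ih (i + 1) (by omega) B hB
    have := Finset.card_lt_card hAB
    omega

theorem main_half {α : Type*} [DecidableEq α] (X : Finset α) (D : ℕ → Finset (Finset α))
    (k : ℕ) (hk : 2 ≤ k) (h : Dec X D k)
    (hmin : ∀ D', Dec X D' k →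
      ∑ i ∈ Finset.range k, (D i).card ≤ ∑ i ∈ Finset.range k, (D' i).card)
    (H : Finset α) (hHX : H ⊆ X) (hH2 : 2 ≤ H.card)
    (hH : ∀ A ∈ D 1, A ∩ H = ∅ ∨ H ⊆ A) :
    (∀ A ∈ smallSets (D 1) H, A.card = 1) ∧
      k - 2 ≤ (smallSets (D 1) H).card ∧ (largeSets (D 1) H).card = 1 := by
  have h1k : 1 < k := by omega
  have memS : ∀ A, A ∈ smallSets (D 1) H ↔ A ∈ D 1 ∧ A ∩ H = ∅ := by
    intro A; simp [smallSets]
  have memL : ∀ A, A ∈ largeSets (D 1) H ↔ A ∈ D 1 ∧ H ⊆ A := by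
    intro A; simp [largeSets]
  have hone : ∀ h : α, ∃ g ∈ H, g ≠ h := by
    intro h
    exact Finset.exists_mem_ne (by omega) h
  obtain ⟨h0, hh0⟩ : H.Nonempty := Finset.card_pos.1 (by omega)
  have hne : ∀ A ∈ D 1, A.Nonempty := by
    intro A hA
    obtain ⟨B, _, hB⟩ := h.lay 0 h1k A hA
    exact Finset.nonempty_iff_ne_empty.2 (by rintro rfl; exact Finset.not_ssubset_empty _ hB)
  -- every free set lies in a large member
  have claim : ∀ Y ⊆ X, H ⊆ Y → (∀ A ∈ smallSets (D 1) H, ¬ A ⊆ Y) →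
      ∃ L ∈ largeSets (D 1) H, Y ⊆ L := by
    intro Y hY hHY hfree
    obtain ⟨B, hB, hc⟩ := h.sat 1 h1k (Y.erase h0) ((Finset.erase_subset _ _).trans hY)
    have hbs := hH B hB
    rcases hc with hc | hc
    · exfalso
      rcases hbs with hs | hl
      · exact hfree B ((memS B).2 ⟨hB, hs⟩) (hc.trans (Finset.erase_subset _ _))
      · exact Finset.notMem_erase h0 Y (hc (hl hh0))
    · obtain ⟨g, hg, hgne⟩ := hone h0
      have hgB : g ∈ B := hc (Finset.mem_erase.2 ⟨hgne, hHY hg⟩)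
      have hl : H ⊆ B := by
        rcases hbs with hs | hl
        · exact absurd (hs ▸ Finset.mem_inter.2 ⟨hgB, hg⟩) (Finset.notMem_empty g)
        · exact hl
      refine ⟨B, (memL B).2 ⟨hB, hl⟩, ?_⟩
      intro y hy
      by_cases e : y = h0
      · exact e ▸ hl hh0
      · exact hc (Finset.mem_erase.2 ⟨e, hy⟩)
  have disj : ∀ A ∈ smallSets (D 1) H, ∀ x ∈ A, x ∉ H := by
    intro A hA x hx hxH
    have := ((memS A).1 hA).2
    exact absurd (this ▸ Finset.mem_inter.2 ⟨hx, hxH⟩) (Finset.notMem_empty x)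
  obtain ⟨L, hL, -⟩ := claim H hHX le_rfl (by
    intro A hA hs
    obtain ⟨x, hx⟩ := hne A ((memS A).1 hA).1
    exact disj A hA x hx (hs hx))
  have hLD := ((memL L).1 hL).1
  have hHL := ((memL L).1 hL).2
  have hLX := h.sub 1 h1k L hLD
  have hLfree : ∀ A ∈ smallSets (D 1) H, ¬ A ⊆ L := by
    intro A hA hs
    have := h.anti 1 h1k A ((memS A).1 hA).1 L hLD hs
    subst this
    exact disj A hA h0 (hHL hh0) hh0
  -- injection
  have hinj : ∀ x ∈ X \ L, ∃ A ∈ smallSets (D 1) H, A ⊆ insert x L ∧ x ∈ A := by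
    intro x hx
    rw [Finset.mem_sdiff] at hx
    by_contra! hcon
    obtain ⟨L', hL', hs⟩ := claim (insert x L)
      (Finset.insert_subset hx.1 hLX) (hHL.trans (Finset.subset_insert _ _)) (by
        intro A hA hs
        have hxA := hcon A hA hs
        apply hLfree A hA
        intro y hy
        rcases Finset.mem_insert.1 (hs hy) with e | e
        · exact absurd (e ▸ hy) hxA
        · exact e)
    have := h.anti 1 h1k L hLD L' ((memL L').1 hL').1 ((Finset.subset_insert _ _).trans hs)
    subst this
    exact hx.2 (hs (Finset.mem_insert_self _ _))
  have hcard1 : (X \ L).card ≤ (smallSets (D 1) H).card := by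
    choose! f hf1 hf2 hf3 using hinj
    apply Finset.card_le_card_of_injOn f (fun x hx => hf1 x hx)
    intro x hx y hy hxy
    have h3 := hf2 y hy (hxy ▸ hf3 x hx)
    rcases Finset.mem_insert.1 h3 with e | e
    · exact e
    · exact absurd e (Finset.mem_sdiff.1 hx).2
  -- replacement
  set N : Finset (Finset α) := insert L ((X \ L).image (fun x => {x})) with hN
  have memN : ∀ A, A ∈ N ↔ A = L ∨ ∃ x, (x ∈ X ∧ x ∉ L) ∧ {x} = A := by
    intro A; simp [hN]
  have hNcard : N.card ≤ (X \ L).card + 1 :=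
    (Finset.card_insert_le _ _).trans (Nat.add_le_add_right Finset.card_image_le 1)
  let D' : ℕ → Finset (Finset α) := fun i => if i = 0 then {∅} else if i = 1 then N else D i
  have hD'0 : D' 0 = {∅} := rfl
  have hD'1 : D' 1 = N := rfl
  have hD'2 : ∀ i, D' (i + 2) = D (i + 2) := fun i => by simp [D']
  have hsp : ∀ i : ℕ, i = 0 ∨ i = 1 ∨ ∃ j, i = j + 2 := by
    intro i
    rcases i with _ | _ | i
    · exact Or.inl rfl
    · exact Or.inr (Or.inl rfl)
    · exact Or.inr (Or.inr ⟨i, rfl⟩)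
  have hDec' : Dec X D' k := by
    refine ⟨?_, ?_, ?_, ?_⟩
    · intro i hi A hA
      obtain rfl | rfl | ⟨j, rfl⟩ := hsp i
      · skip
        rw [hD'0, Finset.mem_singleton] at hA; subst hA; exact Finset.empty_subset _
      · skip
        rw [hD'1, memN] at hA
        rcases hA with eA | ⟨x, hx, rfl⟩
        · rw [eA]; exact hLX
        · simpa using hx.1
      · skip
        rw [hD'2] at hA; exact h.sub _ hi A hA
    · intro i hi A hA B hB hs
      obtain rfl | rfl | ⟨j, rfl⟩ := hsp i
      · skip
        rw [hD'0, Finset.mem_singleton] at hA hB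
        rw [hA, hB]
      · skip
        rw [hD'1, memN] at hA hB
        rcases hA with eA | ⟨x, hx, rfl⟩ <;> rcases hB with eB | ⟨y, hy, rfl⟩
        · rw [eA, eB]
        · rw [eA] at hs
          have := Finset.card_le_card (hHL.trans hs)
          simp at this
          omega
        · rw [eB] at hs
          exact absurd (hs (Finset.mem_singleton_self x)) hx.2
        · simpa using hs
      · skip
        rw [hD'2] at hA hB; exact h.anti _ hi A hA B hB hs
    · intro i hi S hS
      obtain rfl | rfl | ⟨j, rfl⟩ := hsp i
      · skip
        exact ⟨∅, by simp [hD'0], Or.inl (Finset.empty_subset _)⟩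
      · skip
        rw [hD'1]
        by_cases hSL : S ⊆ L
        · exact ⟨L, (memN L).2 (Or.inl rfl), Or.inr hSL⟩
        · obtain ⟨x, hx, hxL⟩ := Finset.not_subset.1 hSL
          exact ⟨{x}, (memN _).2 (Or.inr ⟨x, ⟨hS hx, hxL⟩, rfl⟩), Or.inl (by simpa using hx)⟩
      · skip
        rw [hD'2]; exact h.sat _ hi S hS
    · intro i hi A hA
      obtain rfl | rfl | ⟨j, rfl⟩ := hsp i
      · skip
        refine ⟨∅, by simp [hD'0], ?_⟩
        change A ∈ D' 1 at hA
        rw [hD'1, memN] at hA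
        rw [Finset.empty_ssubset]
        rcases hA with eA | ⟨x, hx, rfl⟩
        · rw [eA]; exact ⟨h0, hHL hh0⟩
        · exact Finset.singleton_nonempty x
      · skip
        change A ∈ D' (0 + 2) at hA
        rw [hD'2] at hA
        obtain ⟨B, hB, hBA⟩ := h.lay 1 hi A hA
        rw [hD'1]
        by_cases hAL : A ⊆ L
        · exfalso
          have e := h.anti 1 h1k B hB L hLD (hBA.1.trans hAL)
          rw [e] at hBA
          exact hBA.2 hAL
        · obtain ⟨x, hx, hxL⟩ := Finset.not_subset.1 hAL
          refine ⟨{x}, (memN _).2 (Or.inr ⟨x, ⟨h.sub 2 hi A hA hx, hxL⟩, rfl⟩), ?_⟩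
          have hc := Finset.card_lt_card hBA
          have hb := Finset.card_pos.2 (hne B hB)
          refine lt_of_le_of_ne (by simpa using hx) ?_
          rintro rfl
          simp at hc
          simp [hc] at hb
      · skip
        change A ∈ D' ((j + 1) + 2) at hA
        rw [hD'2] at hA
        rw [hD'2]
        exact h.lay (j + 2) hi A hA
  have hD0 : 1 ≤ (D 0).card := by
    obtain ⟨A, hA, -⟩ := h.sat 0 (by omega) X le_rfl
    exact Finset.card_pos.2 ⟨A, hA⟩
  have hD1N : (D 1).card ≤ N.card := by
    have hm := hmin D' hDec'
    obtain ⟨m, rfl⟩ : ∃ m, k = m + 2 := ⟨k - 2, by omega⟩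
    rw [Finset.sum_range_succ', Finset.sum_range_succ', Finset.sum_range_succ',
      Finset.sum_range_succ'] at hm
    simp only [zero_add, hD'0, hD'1, Finset.card_singleton,
      show ∀ i, D' (i + 1 + 1) = D (i + 1 + 1) from hD'2] at hm
    omega
  have hsplit : (smallSets (D 1) H).card + (largeSets (D 1) H).card ≤ (D 1).card := by
    rw [← Finset.card_union_of_disjoint]
    · apply Finset.card_le_card
      intro A hA
      rcases Finset.mem_union.1 hA with hA | hA
      · exact ((memS A).1 hA).1
      · exact ((memL A).1 hA).1
    · rw [Finset.disjoint_left]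
      intro A hA hA'
      exact disj A hA h0 (((memL A).1 hA').2 hh0) hh0
  have hLpos : 1 ≤ (largeSets (D 1) H).card := Finset.card_pos.2 ⟨L, hL⟩
  have hL1 : (largeSets (D 1) H).card = 1 := by omega
  have huniq : ∀ L' ∈ largeSets (D 1) H, L' = L := by
    intro L' hL'
    exact Finset.card_le_one.1 hL1.le L' hL' L hL
  refine ⟨?_, ?_, hL1⟩
  · intro A hA
    have hAD := ((memS A).1 hA).1
    have hpos := Finset.card_pos.2 (hne A hAD)
    by_contra hcard
    have key : ∀ a ∈ A, A.erase a ⊆ L := by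
      intro a ha
      obtain ⟨L', hL', hs⟩ := claim (H ∪ A.erase a)
        (Finset.union_subset hHX ((Finset.erase_subset _ _).trans (h.sub 1 h1k A hAD)))
        Finset.subset_union_left (by
          intro B hB hs
          have hBA : B ⊆ A.erase a := by
            intro y hy
            rcases Finset.mem_union.1 (hs hy) with e | e
            · exact absurd e (disj B hB y hy)
            · exact e
          have := h.anti 1 h1k B ((memS B).1 hB).1 A hAD (hBA.trans (Finset.erase_subset _ _))
          subst this
          exact Finset.notMem_erase a B (hBA ha))
      rw [huniq L' hL'] at hs
      exact Finset.subset_union_right.trans hs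
    apply hLfree A hA
    intro y hy
    obtain ⟨a, ha, hay⟩ := Finset.exists_mem_ne (show 1 < A.card by omega) y
    exact key a ha (Finset.mem_erase.2 ⟨hay.symm, hy⟩)
  · have := h.card_up (k - 2) 1 (by omega) L hLD
    have := Finset.card_sdiff_of_subset hLX
    omega

theorem comparable_chain {α : Type*} [DecidableEq α] {X : Finset α} {F : Finset (Finset α)}
    {k : ℕ} (hsat : IsSatKSperner X F k) (S : Finset α) (hS : S ⊆ X) (hSF : S ∉ F) :
    ∃ c : Fin k → Finset α, StrictMono c ∧ (∀ j, c j ∈ F) ∧ ∀ j, c j ⊆ S ∨ S ⊆ c j := by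
  obtain ⟨_, hno, hs⟩ := hsat
  obtain ⟨c, hc, hm⟩ := hs S hS hSF
  obtain ⟨j0, hj0⟩ : ∃ j, c j = S := by
    by_contra! hcon
    exact hno ⟨c, hc, fun i => (Finset.mem_insert.1 (hm i)).resolve_left (hcon i)⟩
  refine ⟨fun j => c (j0.succAbove j), hc.comp (Fin.strictMono_succAbove j0), ?_, ?_⟩
  · intro j
    refine (Finset.mem_insert.1 (hm _)).resolve_left ?_
    intro e
    exact Fin.succAbove_ne j0 j (hc.injective (e.trans hj0.symm))
  · intro j
    subst hj0
    rcases le_total (j0.succAbove j) j0 with h | h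
    · exact Or.inl (hc.monotone h)
    · exact Or.inr (hc.monotone h)

theorem comparable_chain' {α : Type*} [DecidableEq α] {X : Finset α} {F : Finset (Finset α)}
    {k : ℕ} (hsat : IsSatKSperner X F k) (H : Finset α) (hHX : H ⊆ X) (hH2 : 2 ≤ H.card)
    (hH : ∀ A ∈ F, A ∩ H = ∅ ∨ H ⊆ A) (S : Finset α) (hS : S ⊆ X) :
    ∃ c : Fin k → Finset α, StrictMono c ∧ (∀ j, c j ∈ F) ∧ ∀ j, c j ⊆ S ∨ S ⊆ c j := by
  by_cases hSF : S ∈ F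
  swap
  · exact comparable_chain hsat S hS hSF
  obtain ⟨h0, hh0⟩ : H.Nonempty := Finset.card_pos.1 (by omega)
  obtain ⟨g, hg, hgne⟩ := Finset.exists_mem_ne (show 1 < H.card by omega) h0
  have hd : ∀ A ∈ F, ∀ x ∈ A, x ∈ H → H ⊆ A := by
    intro A hA x hx hxH
    rcases hH A hA with h | h
    · exact absurd (h ▸ Finset.mem_inter.2 ⟨hx, hxH⟩) (Finset.notMem_empty x)
    · exact h
  rcases hH S hSF with hs | hl
  · have hgS : g ∉ S := fun h =>
      absurd (hs ▸ Finset.mem_inter.2 ⟨h, hg⟩) (Finset.notMem_empty g)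
    have hnF : insert h0 S ∉ F := by
      intro hF
      have := hd _ hF h0 (Finset.mem_insert_self _ _) hh0 hg
      rcases Finset.mem_insert.1 this with e | e
      · exact hgne e
      · exact hgS e
    obtain ⟨c, hc, hm, hcmp⟩ := comparable_chain hsat _
      (Finset.insert_subset (hHX hh0) hS) hnF
    refine ⟨c, hc, hm, fun j => ?_⟩
    rcases hcmp j with h | h
    · left
      intro y hy
      rcases Finset.mem_insert.1 (h hy) with e | e
      · exfalso
        have := h (hd _ (hm j) y hy (e ▸ hh0) hg)
        rcases Finset.mem_insert.1 this with e | e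
        · exact hgne e
        · exact hgS e
      · exact e
    · exact Or.inr ((Finset.subset_insert _ _).trans h)
  · have hnF : S.erase h0 ∉ F := by
      intro hF
      exact Finset.notMem_erase h0 S
        (hd _ hF g (Finset.mem_erase.2 ⟨hgne, hl hg⟩) hg hh0)
    obtain ⟨c, hc, hm, hcmp⟩ := comparable_chain hsat _
      ((Finset.erase_subset _ _).trans hS) hnF
    refine ⟨c, hc, hm, fun j => ?_⟩
    rcases hcmp j with h | h
    · exact Or.inl (h.trans (Finset.erase_subset _ _))
    · right
      have hHc := hd _ (hm j) g (h (Finset.mem_erase.2 ⟨hgne, hl hg⟩)) hg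
      intro y hy
      by_cases e : y = h0
      · exact e ▸ hHc hh0
      · exact h (Finset.mem_erase.2 ⟨e, hy⟩)

theorem mem_minimalsIn {α : Type*} [DecidableEq α] {G : Finset (Finset α)} {A : Finset α} :
    A ∈ minimalsIn G ↔ A ∈ G ∧ ∀ B ∈ G, B ⊆ A → B = A := by
  simp [minimalsIn]

theorem mem_canonRest_succ {α : Type*} [DecidableEq α] {F : Finset (Finset α)} {A : Finset α}
    {i : ℕ} : A ∈ canonRest F (i + 1) ↔ A ∈ canonRest F i ∧ A ∉ canonDecomp F i := by
  simp [canonRest, canonDecomp]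

theorem canonRest_anti {α : Type*} [DecidableEq α] (F : Finset (Finset α)) :
    Antitone (canonRest F) :=
  antitone_nat_of_succ_le fun _ _ hA => (mem_canonRest_succ.1 hA).1

theorem canonRest_below {α : Type*} [DecidableEq α] {F : Finset (Finset α)} {A : Finset α}
    {i : ℕ} (hA : A ∈ canonRest F (i + 1)) : ∃ B ∈ canonRest F i, B ⊂ A := by
  obtain ⟨h1, h2⟩ := mem_canonRest_succ.1 hA
  rw [canonDecomp, mem_minimalsIn] at h2
  push Not at h2
  obtain ⟨B, hB, hs, hne⟩ := h2 h1
  exact ⟨B, hB, lt_of_le_of_ne hs hne⟩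

theorem canonRest_hc {α : Type*} [DecidableEq α] (F : Finset (Finset α)) :
    ∀ i, ∀ A ∈ canonRest F i, HC F i A := by
  intro i
  induction i with
  | zero => intro A hA; exact HC.base hA
  | succ i ih =>
    intro A hA
    obtain ⟨B, hB, hs⟩ := canonRest_below hA
    exact (ih B hB).step hs (canonRest_anti F (Nat.zero_le _) hA)

theorem canon_cover {α : Type*} [DecidableEq α] {F : Finset (Finset α)} {k : ℕ}
    (hno : ¬ HasChainOfLen F (k + 1)) (A : Finset α) (hA : A ∈ F) :
    ∃ i < k, A ∈ canonDecomp F i := by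
  by_contra! hcon
  have : ∀ i ≤ k, A ∈ canonRest F i := by
    intro i
    induction i with
    | zero => intro _; exact hA
    | succ i ih => intro hi; exact mem_canonRest_succ.2 ⟨ih (by omega), hcon i (by omega)⟩
  exact hno (canonRest_hc F k A (this k le_rfl)).hasChain

theorem canonDecomp_sub {α : Type*} [DecidableEq α] (F : Finset (Finset α)) (i : ℕ) :
    canonDecomp F i ⊆ F := fun _ hA =>
  canonRest_anti F (Nat.zero_le i) (mem_minimalsIn.1 hA).1

theorem canon_dec {α : Type*} [DecidableEq α] {X : Finset α} {F : Finset (Finset α)}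
    {k : ℕ} (hsat : IsSatKSperner X F k) (H : Finset α) (hHX : H ⊆ X) (hH2 : 2 ≤ H.card)
    (hH : ∀ A ∈ F, A ∩ H = ∅ ∨ H ⊆ A) : Dec X (canonDecomp F) k := by
  have hanti : ∀ i, ∀ A ∈ canonDecomp F i, ∀ B ∈ canonDecomp F i, A ⊆ B → A = B := by
    intro i A hA B hB hs
    exact (mem_minimalsIn.1 hB).2 A (mem_minimalsIn.1 hA).1 hs
  refine ⟨fun i _ A hA => hsat.1 A (canonDecomp_sub F i hA), fun i _ => hanti i, ?_, ?_⟩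
  · intro i hi S hS
    obtain ⟨c, hc, hm, hcmp⟩ := comparable_chain' hsat H hHX hH2 hH S hS
    choose f hf hfm using fun j => canon_cover hsat.2.1 (c j) (hm j)
    have hinj : Function.Injective (fun j : Fin k => (⟨f j, hf j⟩ : Fin k)) := by
      intro a b hab
      have hab' : f a = f b := by simpa using hab
      have h1 := hfm a
      have h2 := hfm b
      rw [hab'] at h1
      rcases le_total a b with hle | hle
      · exact hc.injective (hanti _ _ h1 _ h2 (hc.monotone hle))
      · exact (hc.injective (hanti _ _ h2 _ h1 (hc.monotone hle))).symm
    obtain ⟨j, hj⟩ := Finite.surjective_of_injective hinj ⟨i, hi⟩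
    have hj' : f j = i := by simpa using hj
    exact ⟨c j, hj' ▸ hfm j, hcmp j⟩
  · intro i _ A hA
    obtain ⟨h1, h2⟩ := mem_minimalsIn.1 hA
    obtain ⟨B, hB, hs⟩ := canonRest_below h1
    refine ⟨B, ?_, hs⟩
    by_contra hn
    exact hs.ne (h2 B (mem_canonRest_succ.2 ⟨hB, hn⟩) hs.1)

theorem canon_sum {α : Type*} [DecidableEq α] (F : Finset (Finset α)) (k : ℕ) :
    ∑ i ∈ Finset.range k, (canonDecomp F i).card ≤ F.card := by
  rw [← Finset.card_biUnion]
  · apply Finset.card_le_card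
    exact Finset.biUnion_subset.2 fun i _ => canonDecomp_sub F i
  · have key : ∀ i j, i < j → Disjoint (canonDecomp F i) (canonDecomp F j) := by
      intro i j hij
      rw [Finset.disjoint_left]
      intro A hA hA'
      have := canonRest_anti F (show i + 1 ≤ j from hij) (mem_minimalsIn.1 hA').1
      exact (mem_canonRest_succ.1 this).2 hA
    intro i _ j _ hij
    rcases lt_or_gt_of_ne hij with h | h
    · exact key i j h
    · exact (key j i h).symm

theorem first_and_last_antichains {α : Type*} [DecidableEq α]
    (X : Finset α) (F : Finset (Finset α)) (k n : ℕ) (hk : 2 ≤ k)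
    (hn : X.card = n) (hbig : 2 ^ F.card < n)
    (hsat : IsSatKSperner X F k)
    (hmin : ∀ G : Finset (Finset α), IsSatKSperner X G k → F.card ≤ G.card)
    (H : Finset α) (hH : IsHomogAtom X F H) :
    (∀ A ∈ smallSets (canonDecomp F 1) H, A.card = 1) ∧
      k - 2 ≤ (smallSets (canonDecomp F 1) H).card ∧
      (largeSets (canonDecomp F 1) H).card = 1 ∧
      (∀ A ∈ largeSets (canonDecomp F (k - 2)) H, A.card = n - 1) ∧
      k - 2 ≤ (largeSets (canonDecomp F (k - 2)) H).card ∧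
      (smallSets (canonDecomp F (k - 2)) H).card = 1 := by
  obtain ⟨hHX, hHA, -, hH2⟩ := hH
  have hH : ∀ A ∈ F, A ∩ H = ∅ ∨ H ⊆ A := fun A hA =>
    (hHA A hA).imp id Finset.inter_eq_right.1
  have hdec := canon_dec hsat H hHX hH2 hH
  have hm : ∀ D', Dec X D' k → ∑ i ∈ Finset.range k, (canonDecomp F i).card ≤
      ∑ i ∈ Finset.range k, (D' i).card := fun D' hD' =>
    (canon_sum F k).trans ((hmin _ (hD'.isSat (by omega))).trans Finset.card_biUnion_le)
  obtain ⟨a1, a2, a3⟩ := main_half X _ k hk hdec hm H hHX hH2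
    (fun A hA => hH A (canonDecomp_sub F 1 hA))
  have hc1 : cDec X k (canonDecomp F) 1 = (canonDecomp F (k - 2)).image (fun A => X \ A) := by
    simp only [cDec]; rw [show k - 1 - 1 = k - 2 by omega]
  have hsubX : ∀ A ∈ canonDecomp F (k - 2), A ⊆ X := fun A hA =>
    hsat.1 A (canonDecomp_sub F _ hA)
  have hsm : ∀ A, H ⊆ A → (X \ A) ∩ H = ∅ := by
    intro A hA
    ext x
    simp only [Finset.mem_inter, Finset.mem_sdiff, Finset.notMem_empty, iff_false]
    rintro ⟨⟨_, h1⟩, h2⟩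
    exact h1 (hA h2)
  have hlg : ∀ A, A ∩ H = ∅ → H ⊆ X \ A := by
    intro A hA x hx
    refine Finset.mem_sdiff.2 ⟨hHX hx, fun h => ?_⟩
    exact absurd (hA ▸ Finset.mem_inter.2 ⟨h, hx⟩) (Finset.notMem_empty x)
  have inv : ∀ A ⊆ X, X \ (X \ A) = A := fun A hA => Finset.sdiff_sdiff_eq_self hA
  obtain ⟨b1, b2, b3⟩ := main_half X _ k hk hdec.compl
    (fun D' hD' => (cDec_sum X k _).trans ((hm _ hD'.compl).trans (cDec_sum X k D')))
    H hHX hH2 (by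
      rw [hc1]
      intro A hA
      obtain ⟨B, hB, rfl⟩ := Finset.mem_image.1 hA
      rcases hH B (canonDecomp_sub F _ hB) with h | h
      · exact Or.inr (hlg B h)
      · exact Or.inl (hsm B h))
  rw [hc1] at b1 b2 b3
  have hinjOn : Set.InjOn (fun A => X \ A) (canonDecomp F (k - 2) : Set (Finset α)) := by
    intro A hA B hB hAB
    have hAB' : X \ A = X \ B := hAB
    rw [← inv A (hsubX A hA), ← inv B (hsubX B hB), hAB']
  have hls : smallSets ((canonDecomp F (k - 2)).image (fun A => X \ A)) H =
      (largeSets (canonDecomp F (k - 2)) H).image (fun A => X \ A) := by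
    ext S
    simp only [smallSets, largeSets, Finset.mem_filter, Finset.mem_image]
    constructor
    · rintro ⟨⟨A, hA, rfl⟩, h⟩
      refine ⟨A, ⟨hA, ?_⟩, rfl⟩
      have := hlg _ h
      rwa [inv A (hsubX A hA)] at this
    · rintro ⟨A, ⟨hA, h⟩, rfl⟩
      exact ⟨⟨A, hA, rfl⟩, hsm A h⟩
  have hsl : largeSets ((canonDecomp F (k - 2)).image (fun A => X \ A)) H =
      (smallSets (canonDecomp F (k - 2)) H).image (fun A => X \ A) := by
    ext S
    simp only [smallSets, largeSets, Finset.mem_filter, Finset.mem_image]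
    constructor
    · rintro ⟨⟨A, hA, rfl⟩, h⟩
      refine ⟨A, ⟨hA, ?_⟩, rfl⟩
      have := hsm _ h
      rwa [inv A (hsubX A hA)] at this
    · rintro ⟨A, ⟨hA, h⟩, rfl⟩
      exact ⟨⟨A, hA, rfl⟩, hlg A h⟩
  rw [hls] at b1 b2
  rw [hsl, Finset.card_image_of_injOn] at b3
  swap
  · exact hinjOn.mono (by exact_mod_cast Finset.filter_subset _ _)
  refine ⟨a1, a2, a3, ?_, b2.trans Finset.card_image_le, b3⟩
  intro A hA
  have h1 := b1 _ (Finset.mem_image_of_mem _ hA)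
  have hAX := hsubX A (Finset.mem_filter.1 hA).1
  have h2 := Finset.card_sdiff_of_subset hAX
  have h3 := Finset.card_le_card hAX
  omega
end

section
/- Let X be a finite set and let F ⊆ P(X) be a saturated k-Sperner system with a homogeneous atom H, and let (A_i)_{i=0}^{k-1} be its canonical decomposition. Then A_i is a saturated antichain for every 0 ≤ i ≤ k−1. -/
open Finset

theorem mem_rest_succ {α : Type*} [DecidableEq α] (F : Finset (Finset α)) (i : ℕ)
    (A : Finset α) : A ∈ canonRest F (i + 1) ↔ A ∈ canonRest F i ∧ ∃ B ∈ canonRest F i, B ⊂ A := by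
  simp only [canonRest, minimalsIn, Finset.mem_sdiff, Finset.mem_filter, not_and, not_forall]
  constructor
  · rintro ⟨h, h2⟩
    obtain ⟨B, hB, hBA, hne⟩ := h2 h
    exact ⟨h, B, hB, lt_of_le_of_ne hBA hne⟩
  · rintro ⟨h, B, hB, hBA⟩
    exact ⟨h, fun _ => ⟨B, hB, hBA.1, hBA.ne⟩⟩

theorem rest_subset {α : Type*} [DecidableEq α] (F : Finset (Finset α)) (i : ℕ)
    (A : Finset α) (h : A ∈ canonRest F i) : A ∈ F := by
  induction i with
  | zero => exact h
  | succ i ih => exact ih ((mem_rest_succ F i A).1 h).1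

theorem rest_up {α : Type*} [DecidableEq α] (F : Finset (Finset α)) (i : ℕ)
    (A B : Finset α) (h : A ∈ canonRest F i) (hB : B ∈ F) (hAB : A ⊂ B) :
    B ∈ canonRest F (i + 1) := by
  induction i with
  | zero => exact (mem_rest_succ F 0 B).2 ⟨hB, A, h, hAB⟩
  | succ i ih => exact (mem_rest_succ F _ B).2 ⟨ih ((mem_rest_succ F i A).1 h).1, A, h, hAB⟩

theorem rest_chain {α : Type*} [DecidableEq α] (F : Finset (Finset α)) (i : ℕ)
    (A : Finset α) (h : A ∈ canonRest F i) :
    ∃ C : ℕ → Finset α, (∀ j < i, C j ⊂ C (j + 1)) ∧ (∀ j ≤ i, C j ∈ F) ∧ C i = A := by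
  induction i generalizing A with
  | zero => exact ⟨fun _ => A, by simp, fun _ _ => h, rfl⟩
  | succ i ih =>
    have hAF := rest_subset F _ A h
    obtain ⟨-, B, hB, hBA⟩ := (mem_rest_succ F i A).1 h
    obtain ⟨C, h1, h2, h3⟩ := ih B hB
    refine ⟨fun j => if j ≤ i then C j else A, ?_, ?_, by simp⟩
    · intro j hj
      rcases Nat.lt_or_ge j i with hji | hji
      · have := h1 j hji
        simpa [hji.le, Nat.succ_le_of_lt hji] using this
      · obtain rfl : j = i := by omega
        simpa [h3] using hBA
    · intro j hj
      dsimp only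
      split_ifs with hji
      · exact h2 j hji
      · exact hAF

theorem rest_empty {α : Type*} [DecidableEq α] (F : Finset (Finset α)) (k : ℕ)
    (hF : ¬ HasChainOfLen F (k + 1)) (A : Finset α) : A ∉ canonRest F k := by
  intro h
  obtain ⟨C, h1, h2, -⟩ := rest_chain F k A h
  refine hF ⟨fun j => C j, ?_, fun j => h2 j (by omega)⟩
  rw [Fin.strictMono_iff_lt_succ]
  intro j
  simpa using h1 j j.2

theorem exists_decomp_le {α : Type*} [DecidableEq α] (F : Finset (Finset α)) (i : ℕ)
    (A : Finset α) (h : A ∈ canonRest F i) : ∃ B ∈ canonDecomp F i, B ⊆ A := by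
  obtain ⟨B, hBA, hB⟩ := (canonRest F i).finite_toSet.exists_le_minimal h
  refine ⟨B, ?_, hBA⟩
  simp only [canonDecomp, minimalsIn, Finset.mem_filter]
  exact ⟨hB.1, fun D hD hDB => le_antisymm hDB (hB.2 hD hDB)⟩

theorem mem_decomp {α : Type*} [DecidableEq α] (F : Finset (Finset α)) (i : ℕ)
    (A : Finset α) : A ∈ canonDecomp F i ↔ A ∈ canonRest F i ∧ A ∉ canonRest F (i + 1) := by
  simp only [canonRest, canonDecomp, Finset.mem_sdiff]
  simp only [minimalsIn, Finset.mem_filter]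
  tauto

theorem comparable_of_notMem {α : Type*} [DecidableEq α]
    (X : Finset α) (F : Finset (Finset α)) (k : ℕ)
    (hsat : IsSatKSperner X F k) (i : ℕ) (hi : i < k) (S : Finset α) (hS : S ⊆ X)
    (hSF : S ∉ F) : ∃ A ∈ canonDecomp F i, A ⊆ S ∨ S ⊆ A := by
  obtain ⟨C, hC, hCF⟩ := hsat.2.2 S hS hSF
  by_cases hd : ∃ d, C d = S
  swap
  · push Not at hd
    exact absurd ⟨C, hC, fun j => (Finset.mem_insert.1 (hCF j)).resolve_left (hd j)⟩ hsat.2.1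
  obtain ⟨d, hd⟩ := hd
  have hF : ∀ j, j ≠ d → C j ∈ F := fun j hj =>
    (Finset.mem_insert.1 (hCF j)).resolve_left (fun h => hj (hC.injective (h.trans hd.symm)))
  have low : ∀ j (hj : j < k + 1), j < d.1 → C ⟨j, hj⟩ ∈ canonRest F j := by
    intro j
    induction j with
    | zero => intro hj hjd; exact hF _ (Fin.ne_of_val_ne (by simpa using hjd.ne))
    | succ j ih =>
      intro hj hjd
      exact rest_up F j _ _ (ih (by omega) (by omega)) (hF _ (Fin.ne_of_val_ne hjd.ne))
        (hC (Fin.mk_lt_mk.2 (by omega)))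
  have high : ∀ j (hj : j + 1 < k + 1), d.1 ≤ j → C ⟨j + 1, hj⟩ ∈ canonRest F j := by
    intro j
    induction j with
    | zero => intro hj hjd; exact hF _ (Fin.ne_of_val_ne (by simp; omega))
    | succ j ih =>
      intro hj hjd
      rcases Nat.lt_or_ge j d.1 with h | h
      · exact rest_up F j _ _ (low j (by omega) h) (hF _ (Fin.ne_of_val_ne (by simp; omega)))
          (hC (Fin.mk_lt_mk.2 (by omega)))
      · exact rest_up F j _ _ (ih (by omega) h) (hF _ (Fin.ne_of_val_ne (by simp; omega)))
          (hC (Fin.mk_lt_mk.2 (by omega)))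
  rcases Nat.lt_or_ge i d.1 with h | h
  · obtain ⟨B, hB, hBC⟩ := exists_decomp_le F i _ (low i (by omega) h)
    refine ⟨B, hB, Or.inl (hBC.trans ?_)⟩
    rw [← hd]
    exact hC.monotone h.le
  · refine ⟨C ⟨i + 1, by omega⟩, (mem_decomp F i _).2 ⟨high i (by omega) h, fun hbad => ?_⟩,
      Or.inr ?_⟩
    · have top : ∀ t (ht : i + 1 + t < k + 1), C ⟨i + 1 + t, ht⟩ ∈ canonRest F (i + 1 + t) := by
        intro t
        induction t with
        | zero => intro _; exact hbad
        | succ t ih =>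
          intro ht
          exact rest_up F (i + 1 + t) _ _ (ih (by omega))
            (hF _ (Fin.ne_of_val_ne (by simp; omega))) (hC (Fin.mk_lt_mk.2 (by omega)))
      have h3 := top (k - (i + 1)) (by omega)
      have e : i + 1 + (k - (i + 1)) = k := by omega
      generalize C ⟨i + 1 + (k - (i + 1)), _⟩ = Z at h3
      rw [e] at h3
      exact rest_empty F k hsat.2.1 _ h3
    · rw [← hd]
      exact hC.monotone (Fin.mk_le_mk.2 (by omega : d.1 ≤ i + 1))

theorem comparable_all {α : Type*} [DecidableEq α]
    (X : Finset α) (F : Finset (Finset α)) (k : ℕ)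
    (hsat : IsSatKSperner X F k) (H : Finset α) (hH : IsHomogAtom X F H)
    (i : ℕ) (hi : i < k) (S : Finset α) (hS : S ⊆ X) :
    ∃ A ∈ canonDecomp F i, A ⊆ S ∨ S ⊆ A := by
  by_cases hSF : S ∈ F
  swap
  · exact comparable_of_notMem X F k hsat i hi S hS hSF
  obtain ⟨hHX, hat, -, hcard⟩ := hH
  obtain ⟨x, hx, y, hy, hxy⟩ := Finset.one_lt_card.1 hcard
  have hat' : ∀ T ∈ F, (x ∈ T ↔ y ∈ T) := by
    intro T hT
    rcases hat T hT with h | h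
    · have h1 : x ∉ T ∩ H := by simp [h]
      have h2 : y ∉ T ∩ H := by simp [h]
      rw [Finset.mem_inter] at h1 h2
      tauto
    · have h1 : x ∈ T ∩ H := by simpa [h] using hx
      have h2 : y ∈ T ∩ H := by simpa [h] using hy
      rw [Finset.mem_inter] at h1 h2
      tauto
  have hDF : ∀ A ∈ canonDecomp F i, A ∈ F := fun A hA =>
    rest_subset F i A ((mem_decomp F i A).1 hA).1
  by_cases hxS : x ∈ S
  · have hyS := (hat' S hSF).1 hxS
    obtain ⟨A, hA, h⟩ := comparable_of_notMem X F k hsat i hi (S.erase x)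
      ((Finset.erase_subset _ _).trans hS) (fun h => by have := hat' _ h; simp [hyS, hxy.symm] at this)
    refine ⟨A, hA, h.imp (fun h => h.trans (Finset.erase_subset _ _)) fun h => ?_⟩
    have hxA := (hat' A (hDF A hA)).2 (h (Finset.mem_erase.2 ⟨hxy.symm, hyS⟩))
    intro z hz
    by_cases hzx : z = x
    · exact hzx ▸ hxA
    · exact h (Finset.mem_erase.2 ⟨hzx, hz⟩)
  · have hyS := (hat' S hSF).not.1 hxS
    obtain ⟨A, hA, h⟩ := comparable_of_notMem X F k hsat i hi (insert x S)
      (Finset.insert_subset (hHX hx) hS)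
      (fun h => by have := hat' _ h; simp [hyS, hxy.symm] at this)
    refine ⟨A, hA, h.imp (fun h => ?_) fun h => (Finset.subset_insert _ _).trans h⟩
    have hyA : y ∉ A := fun hyA => by
      have := h hyA
      simp [hyS, hxy.symm] at this
    have hxA := (hat' A (hDF A hA)).not.2 hyA
    exact (Finset.subset_insert_iff_of_notMem hxA).1 h

theorem canonical_decomposition_saturated {α : Type*} [DecidableEq α]
    (X : Finset α) (F : Finset (Finset α)) (k : ℕ)
    (hsat : IsSatKSperner X F k) (H : Finset α) (hH : IsHomogAtom X F H) :
    ∀ i < k, IsSatKSperner X (canonDecomp F i) 1 := by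
  intro i hi
  have hDF : ∀ A ∈ canonDecomp F i, A ∈ F := fun A hA =>
    rest_subset F i A ((mem_decomp F i A).1 hA).1
  refine ⟨fun A hA => hsat.1 A (hDF A hA), ?_, ?_⟩
  · rintro ⟨C, hC, hCD⟩
    exact ((mem_decomp F i _).1 (hCD 1)).2 (rest_up F i _ _ ((mem_decomp F i _).1 (hCD 0)).1
      (hDF _ (hCD 1)) (hC (by simp)))
  · intro S hS hSD
    obtain ⟨A, hA, h⟩ := comparable_all X F k hsat H hH i hi S hS
    have hne : A ≠ S := fun h => hSD (h ▸ hA)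
    rcases h with h | h
    · refine ⟨![A, S], ?_, ?_⟩
      · rw [Fin.strictMono_iff_lt_succ]
        intro j
        fin_cases j
        exact lt_of_le_of_ne h hne
      · intro j
        fin_cases j <;> simp [hA]
    · refine ⟨![S, A], ?_, ?_⟩
      · rw [Fin.strictMono_iff_lt_succ]
        intro j
        fin_cases j
        exact lt_of_le_of_ne h hne.symm
      · intro j
        fin_cases j <;> simp [hA]
end

section
/- For every integer k ≥ 6 there exists n₀ such that for every n ≥ n₀ there is a saturated k-Sperner system F ⊆ P([n]) with |F| ≤ 2^{(1−ε)k}, where ε = 1 − (log₂ 15)/4 (equivalently, |F| ≤ 15^{k/4}). -/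
open Finset

/-- A rank certificate on a poset `P`: a monotone rank function `h` with values in `[0, t]`,
realised from below by a family `Sm` of size `s`, and from above by a family `La` of size `l`. -/
structure Cert (P : Type) [PartialOrder P] (t : ℕ) (h : P → ℕ) (Sm La : Finset P) : Prop where
  mono : ∀ A B, A ≤ B → h A ≤ h B
  le : ∀ A, h A ≤ t
  sm_strict : ∀ A ∈ Sm, ∀ B ∈ Sm, A < B → h A < h B
  la_strict : ∀ A ∈ La, ∀ B ∈ La, A < B → h A < h B
  sm_ex : ∀ A, ∃ B ∈ Sm, B ≤ A ∧ h B = h A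
  la_ex : ∀ A, ∃ B ∈ La, A ≤ B ∧ h B = h A
  sm_step : ∀ A ∈ Sm, 0 < h A → ∃ B ∈ Sm, B < A ∧ h B + 1 = h A
  la_step : ∀ A ∈ La, h A < t → ∃ B ∈ La, A < B ∧ h B = h A + 1

/-- Certificates multiply. -/
theorem Cert.prod {P Q : Type} [PartialOrder P] [PartialOrder Q] {t u : ℕ} {h : P → ℕ}
    {g : Q → ℕ} {S L : Finset P} {S' L' : Finset Q} (c : Cert P t h S L) (d : Cert Q u g S' L') :
    Cert (P × Q) (t + u) (fun x => h x.1 + g x.2) (S ×ˢ S') (L ×ˢ L') where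
  mono A B hAB := Nat.add_le_add (c.mono _ _ hAB.1) (d.mono _ _ hAB.2)
  le A := Nat.add_le_add (c.le _) (d.le _)
  sm_strict := by
    rintro ⟨a, b⟩ hA ⟨a', b'⟩ hB hlt
    rw [Finset.mem_product] at hA hB
    rcases Prod.mk_lt_mk.1 hlt with ⟨h1, h2⟩ | ⟨h1, h2⟩
    · exact add_lt_add_of_lt_of_le (c.sm_strict _ hA.1 _ hB.1 h1) (d.mono _ _ h2)
    · exact add_lt_add_of_le_of_lt (c.mono _ _ h1) (d.sm_strict _ hA.2 _ hB.2 h2)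
  la_strict := by
    rintro ⟨a, b⟩ hA ⟨a', b'⟩ hB hlt
    rw [Finset.mem_product] at hA hB
    rcases Prod.mk_lt_mk.1 hlt with ⟨h1, h2⟩ | ⟨h1, h2⟩
    · exact add_lt_add_of_lt_of_le (c.la_strict _ hA.1 _ hB.1 h1) (d.mono _ _ h2)
    · exact add_lt_add_of_le_of_lt (c.mono _ _ h1) (d.la_strict _ hA.2 _ hB.2 h2)
  sm_ex := by
    rintro ⟨a, b⟩
    obtain ⟨x, hx, hx1, hx2⟩ := c.sm_ex a
    obtain ⟨y, hy, hy1, hy2⟩ := d.sm_ex b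
    exact ⟨(x, y), Finset.mem_product.2 ⟨hx, hy⟩, ⟨hx1, hy1⟩, by simp [hx2, hy2]⟩
  la_ex := by
    rintro ⟨a, b⟩
    obtain ⟨x, hx, hx1, hx2⟩ := c.la_ex a
    obtain ⟨y, hy, hy1, hy2⟩ := d.la_ex b
    exact ⟨(x, y), Finset.mem_product.2 ⟨hx, hy⟩, ⟨hx1, hy1⟩, by simp [hx2, hy2]⟩
  sm_step := by
    rintro ⟨a, b⟩ hA hpos
    rw [Finset.mem_product] at hA
    simp only at hpos hA
    by_cases ha : 0 < h a
    · obtain ⟨x, hx, hx1, hx2⟩ := c.sm_step a hA.1 ha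
      exact ⟨(x, b), Finset.mem_product.2 ⟨hx, hA.2⟩, Prod.mk_lt_mk.2 (Or.inl ⟨hx1, le_rfl⟩),
        by simp only; omega⟩
    · obtain ⟨x, hx, hx1, hx2⟩ := d.sm_step b hA.2 (by omega)
      exact ⟨(a, x), Finset.mem_product.2 ⟨hA.1, hx⟩, Prod.mk_lt_mk.2 (Or.inr ⟨le_rfl, hx1⟩),
        by simp only; omega⟩
  la_step := by
    rintro ⟨a, b⟩ hA hpos
    rw [Finset.mem_product] at hA
    simp only at hpos hA
    by_cases ha : h a < t
    · obtain ⟨x, hx, hx1, hx2⟩ := c.la_step a hA.1 ha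
      exact ⟨(x, b), Finset.mem_product.2 ⟨hx, hA.2⟩, Prod.mk_lt_mk.2 (Or.inl ⟨hx1, le_rfl⟩),
        by simp only; omega⟩
    · have := c.le a
      obtain ⟨x, hx, hx1, hx2⟩ := d.la_step b hA.2 (by omega)
      exact ⟨(a, x), Finset.mem_product.2 ⟨hA.1, hx⟩, Prod.mk_lt_mk.2 (Or.inr ⟨le_rfl, hx1⟩),
        by simp only; omega⟩

/-- Certificates transport along order isomorphisms. -/
theorem Cert.congr {P Q : Type} [PartialOrder P] [PartialOrder Q] {t : ℕ} {h : P → ℕ}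
    {S L : Finset P} (c : Cert P t h S L) (e : P ≃o Q) :
    Cert Q t (fun x => h (e.symm x)) (S.map e.toEquiv.toEmbedding)
      (L.map e.toEquiv.toEmbedding) where
  mono A B hAB := c.mono _ _ (e.symm.monotone hAB)
  le A := c.le _
  sm_strict := by
    intro A hA B hB hlt
    simp only [Finset.mem_map] at hA hB
    obtain ⟨a, ha, rfl⟩ := hA
    obtain ⟨b, hb, rfl⟩ := hB
    simpa using c.sm_strict a ha b hb (by simpa using hlt)
  la_strict := by
    intro A hA B hB hlt
    simp only [Finset.mem_map] at hA hB
    obtain ⟨a, ha, rfl⟩ := hA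
    obtain ⟨b, hb, rfl⟩ := hB
    simpa using c.la_strict a ha b hb (by simpa using hlt)
  sm_ex := by
    intro A
    obtain ⟨B, hB, h1, h2⟩ := c.sm_ex (e.symm A)
    exact ⟨e B, Finset.mem_map.2 ⟨B, hB, rfl⟩, by rwa [← e.le_symm_apply], by simpa using h2⟩
  la_ex := by
    intro A
    obtain ⟨B, hB, h1, h2⟩ := c.la_ex (e.symm A)
    exact ⟨e B, Finset.mem_map.2 ⟨B, hB, rfl⟩, by rwa [← e.symm_apply_le], by simpa using h2⟩
  sm_step := by
    intro A hA hpos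
    obtain ⟨a, ha, rfl⟩ := Finset.mem_map.1 hA
    obtain ⟨B, hB, h1, h2⟩ := c.sm_step a ha (by simpa using hpos)
    exact ⟨e B, Finset.mem_map.2 ⟨B, hB, rfl⟩, by simpa using h1, by simpa using h2⟩
  la_step := by
    intro A hA hpos
    obtain ⟨a, ha, rfl⟩ := Finset.mem_map.1 hA
    obtain ⟨B, hB, h1, h2⟩ := c.la_step a ha (by simpa using hpos)
    exact ⟨e B, Finset.mem_map.2 ⟨B, hB, rfl⟩, by simpa using h1, by simpa using h2⟩

/-- Existence of a certificate on some finite Boolean lattice with both families of size `s`. -/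
def HasCert (t s : ℕ) : Prop :=
  ∃ (m : ℕ) (h : Finset (Fin m) → ℕ) (S L : Finset (Finset (Fin m))),
    Cert (Finset (Fin m)) t h S L ∧ S.card = s ∧ L.card = s

/-- Transport of finsets along an equivalence, as an order isomorphism. -/
def finsetIso {α β : Type} (e : α ≃ β) : Finset α ≃o Finset β where
  toEquiv := e.finsetCongr
  map_rel_iff' := by
    intro a b
    simp [Equiv.finsetCongr]

theorem HasCert.mul {t s u r : ℕ} (h1 : HasCert t s) (h2 : HasCert u r) :
    HasCert (t + u) (s * r) := by
  obtain ⟨m, h, S, L, c, rfl, hL⟩ := h1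
  obtain ⟨m', h', S', L', c', rfl, hL'⟩ := h2
  refine ⟨m + m', _, _, _,
    (c.prod c').congr (Finset.sumEquiv.symm.trans (finsetIso finSumFinEquiv)), ?_, ?_⟩
  · simp
  · simp [hL, hL']

theorem hasCert_zero : HasCert 0 1 := by
  refine ⟨0, fun _ => 0, {∅}, {∅}, ?_, rfl, rfl⟩
  constructor <;> simp

theorem hasCert_one : HasCert 1 2 := by
  refine ⟨1, Finset.card, Finset.univ, Finset.univ, ?_, by simp, by simp⟩
  constructor
  · exact fun A B h => Finset.card_le_card h
  all_goals decide

/-- Subset of `Fin 6` coded by a bit mask. -/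
def ofMask (n : ℕ) : Finset (Fin 6) := Finset.univ.filter fun i => n.testBit i

def lev (l : List ℕ) (A : Finset (Fin 6)) : ℕ := if ∃ x ∈ l, ofMask x ⊆ A then 1 else 0

theorem lev_mono (l : List ℕ) {A B : Finset (Fin 6)} (h : A ⊆ B) : lev l A ≤ lev l B := by
  unfold lev
  by_cases h1 : ∃ x ∈ l, ofMask x ⊆ A
  · have h2 : ∃ x ∈ l, ofMask x ⊆ B := by
      obtain ⟨x, hx, hs⟩ := h1
      exact ⟨x, hx, hs.trans h⟩
    rw [if_pos h1, if_pos h2]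
  · rw [if_neg h1]
    exact Nat.zero_le _

theorem lev_le (l : List ℕ) (A : Finset (Fin 6)) : lev l A ≤ 1 := by
  unfold lev
  split_ifs <;> simp

/-- Rank function of the 30-element saturated 6-Sperner system. -/
def rk (A : Finset (Fin 6)) : ℕ :=
  lev [1, 2, 4, 8] A + lev [12, 17, 18, 33, 34] A + lev [22, 25, 38, 41] A + lev [23] A

def smFam : Finset (Finset (Fin 6)) :=
  ([0, 1, 2, 4, 8, 12, 17, 18, 33, 34, 22, 25, 38, 41, 23] : List ℕ).toFinset.image ofMask

def laFam : Finset (Finset (Fin 6)) :=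
  ([48, 7, 11, 52, 56, 15, 51, 53, 58, 60, 47, 59, 61, 62, 63] : List ℕ).toFinset.image ofMask

theorem hasCert_four : HasCert 4 15 := by
  refine ⟨6, rk, smFam, laFam, ?_, by decide +kernel, by decide +kernel⟩
  constructor
  · intro A B h
    unfold rk
    gcongr <;> exact lev_mono _ h
  · intro A
    unfold rk
    have := lev_le [1, 2, 4, 8] A
    have := lev_le [12, 17, 18, 33, 34] A
    have := lev_le [22, 25, 38, 41] A
    have := lev_le [23] A
    omega
  all_goals decide +kernel

theorem hasCert_pow (j r : ℕ) : HasCert (4 * j + r) (15 ^ j * 2 ^ r) := by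
  have h1 : HasCert (4 * j) (15 ^ j) := by
    induction j with
    | zero => exact hasCert_zero
    | succ j ih => simpa [pow_succ, mul_add] using ih.mul hasCert_four
  have h2 : HasCert r (2 ^ r) := by
    induction r with
    | zero => exact hasCert_zero
    | succ r ih => simpa [pow_succ] using ih.mul hasCert_one
  exact h1.mul h2

theorem Cert.sm_list {P : Type} [PartialOrder P] {t : ℕ} {h : P → ℕ} {S L : Finset P}
    (c : Cert P t h S L) : ∀ (j : ℕ) (B : P), B ∈ S → h B = j →
      ∃ l : List P, l.length = j + 1 ∧ (∀ x ∈ l, x ∈ S ∧ x ≤ B) ∧ l.Pairwise (· < ·) := by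
  intro j
  induction j with
  | zero =>
    intro B hB _
    exact ⟨[B], rfl, by simp [hB], by simp⟩
  | succ j ih =>
    intro B hB hj
    obtain ⟨A, hA, hlt, hh⟩ := c.sm_step B hB (by omega)
    obtain ⟨l, h1, h2, h3⟩ := ih A hA (by omega)
    refine ⟨l ++ [B], by simp [h1], ?_, ?_⟩
    · intro x hx
      rcases List.mem_append.1 hx with hx | hx
      · exact ⟨(h2 x hx).1, (h2 x hx).2.trans hlt.le⟩
      · rw [List.mem_singleton.1 hx]
        exact ⟨hB, le_rfl⟩
    · rw [List.pairwise_append]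
      refine ⟨h3, by simp, ?_⟩
      intro x hx y hy
      rw [List.mem_singleton.1 hy]
      exact (h2 x hx).2.trans_lt hlt

theorem Cert.la_list {P : Type} [PartialOrder P] {t : ℕ} {h : P → ℕ} {S L : Finset P}
    (c : Cert P t h S L) : ∀ (j : ℕ) (B : P), B ∈ L → h B + j = t →
      ∃ l : List P, l.length = j + 1 ∧ (∀ x ∈ l, x ∈ L ∧ B ≤ x) ∧ l.Pairwise (· < ·) := by
  intro j
  induction j with
  | zero =>
    intro B hB _
    exact ⟨[B], rfl, by simp [hB], by simp⟩
  | succ j ih =>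
    intro B hB hj
    obtain ⟨A, hA, hlt, hh⟩ := c.la_step B hB (by omega)
    obtain ⟨l, h1, h2, h3⟩ := ih A hA (by omega)
    refine ⟨B :: l, by simp [h1], ?_, ?_⟩
    · intro x hx
      rcases List.mem_cons.1 hx with hx | hx
      · rw [hx]
        exact ⟨hB, le_rfl⟩
      · exact ⟨(h2 x hx).1, hlt.le.trans (h2 x hx).2⟩
    · rw [List.pairwise_cons]
      exact ⟨fun x hx => hlt.trans_le (h2 x hx).2, h3⟩

/-- Embedding of `P(Fin m)` into `P(ℕ)`, shifted by one. -/
def emb (m : ℕ) (A : Finset (Fin m)) : Finset ℕ := A.image fun i => i.val + 1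

/-- Trace of a set of naturals on `{1, …, m}`. -/
def tr (m : ℕ) (S : Finset ℕ) : Finset (Fin m) := Finset.univ.filter fun i => i.val + 1 ∈ S

theorem mem_emb {m : ℕ} {A : Finset (Fin m)} {x : ℕ} :
    x ∈ emb m A ↔ ∃ i ∈ A, i.val + 1 = x := by
  simp [emb]

theorem mem_tr {m : ℕ} {S : Finset ℕ} {i : Fin m} : i ∈ tr m S ↔ i.val + 1 ∈ S := by
  simp [tr]

theorem emb_le {m : ℕ} {A : Finset (Fin m)} {x : ℕ} (h : x ∈ emb m A) : 1 ≤ x ∧ x ≤ m := by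
  obtain ⟨i, _, rfl⟩ := mem_emb.1 h
  omega

theorem tr_emb {m : ℕ} (A : Finset (Fin m)) : tr m (emb m A) = A := by
  ext i
  rw [mem_tr, mem_emb]
  constructor
  · rintro ⟨j, hj, h⟩
    have : j = i := Fin.ext (by omega)
    rwa [← this]
  · exact fun h => ⟨i, h, rfl⟩

theorem tr_emb_union {m n : ℕ} (A : Finset (Fin m)) :
    tr m (emb m A ∪ Finset.Icc (m + 1) n) = A := by
  ext i
  have h := congrArg (fun s => i ∈ s) (tr_emb A)
  simp only [mem_tr, eq_iff_iff] at h
  rw [mem_tr, Finset.mem_union, h, Finset.mem_Icc]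
  constructor
  · rintro (h | h)
    · exact h
    · omega
  · exact Or.inl

theorem tr_mono {m : ℕ} {S T : Finset ℕ} (h : S ⊆ T) : tr m S ⊆ tr m T := by
  intro i hi
  rw [mem_tr] at *
  exact h hi

theorem emb_mono {m : ℕ} {A B : Finset (Fin m)} (h : A ⊆ B) : emb m A ⊆ emb m B :=
  Finset.image_subset_image h

theorem emb_tr {m : ℕ} (S : Finset ℕ) : emb m (tr m S) ⊆ S := by
  intro x hx
  obtain ⟨i, hi, rfl⟩ := mem_emb.1 hx
  exact mem_tr.1 hi

theorem sub_emb_tr {m n : ℕ} {S : Finset ℕ} (hS : S ⊆ Finset.Icc 1 n) :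
    S ⊆ emb m (tr m S) ∪ Finset.Icc (m + 1) n := by
  intro x hx
  have h := Finset.mem_Icc.1 (hS hx)
  rw [Finset.mem_union, mem_emb, Finset.mem_Icc]
  by_cases hm : m + 1 ≤ x
  · exact Or.inr ⟨hm, h.2⟩
  · refine Or.inl ⟨⟨x - 1, by omega⟩, mem_tr.2 ?_, by simp only; omega⟩
    have : x - 1 + 1 = x := by omega
    simpa [this] using hx

theorem strict_of_tr {m : ℕ} {S T : Finset ℕ} (h : S ⊂ T) (hne : tr m S ≠ tr m T) :
    tr m S < tr m T := lt_of_le_of_ne (tr_mono h.subset) hne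

theorem hasChain_of_list {F : Finset (Finset ℕ)} {m : ℕ} (l : List (Finset ℕ))
    (hl : l.length = m) (hF : ∀ x ∈ l, x ∈ F) (hp : l.Pairwise (· < ·)) :
    HasChainOfLen F m := by
  subst hl
  refine ⟨fun i => l.get i, ?_, fun i => hF _ (List.get_mem l i)⟩
  intro i j hij
  exact List.pairwise_iff_get.1 hp i j hij

theorem Cert.saturated {m n t : ℕ} {h : Finset (Fin m) → ℕ} {S L : Finset (Finset (Fin m))}
    (c : Cert (Finset (Fin m)) t h S L) (hn : m + 1 ≤ n) :
    IsSatKSperner (Finset.Icc 1 n)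
      (S.image (emb m) ∪ L.image fun A => emb m A ∪ Finset.Icc (m + 1) n) (t + 2) := by
  have memF : ∀ T, T ∈ S.image (emb m) ∪ L.image (fun A => emb m A ∪ Finset.Icc (m + 1) n) ↔
      (∃ A ∈ S, emb m A = T) ∨ ∃ A ∈ L, emb m A ∪ Finset.Icc (m + 1) n = T := by
    intro T
    simp
  refine ⟨?_, ?_, ?_⟩
  · intro T hT x hx
    rw [Finset.mem_Icc]
    rcases (memF T).1 hT with ⟨A, _, rfl⟩ | ⟨A, _, rfl⟩
    · have := emb_le hx
      omega
    · rcases Finset.mem_union.1 hx with hx | hx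
      · have := emb_le hx
        omega
      · have := Finset.mem_Icc.1 hx
        omega
  · rintro ⟨C, hC, hCF⟩
    let ρ : Finset ℕ → ℕ := fun T => h (tr m T) + if n ∈ T then 1 else 0
    have hnot : ∀ A : Finset (Fin m), n ∉ emb m A := by
      intro A hA
      have := emb_le hA
      omega
    have hin : ∀ A : Finset (Fin m), n ∈ emb m A ∪ Finset.Icc (m + 1) n := by
      intro A
      rw [Finset.mem_union, Finset.mem_Icc]
      exact Or.inr ⟨hn, le_rfl⟩
    have key : ∀ i j, i < j → ρ (C i) < ρ (C j) := by
      intro i j hij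
      have hlt : C i < C j := hC hij
      have hle := hlt.le
      have htr : tr m (C i) ≤ tr m (C j) := tr_mono hle
      rcases (memF _).1 (hCF i) with ⟨A, hA, hAe⟩ | ⟨A, hA, hAe⟩ <;>
      rcases (memF _).1 (hCF j) with ⟨B, hB, hBe⟩ | ⟨B, hB, hBe⟩ <;>
      rw [← hAe, ← hBe] at hlt hle htr ⊢ <;>
      simp only [ρ, tr_emb, tr_emb_union, hnot, hin, if_true, if_false] at htr ⊢
      · have hne : A ≠ B := by
          rintro rfl
          exact lt_irrefl _ hlt
        have := c.sm_strict A hA B hB (lt_of_le_of_ne htr hne)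
        omega
      · have := c.mono A B htr
        omega
      · exact absurd (hle (hin A)) (hnot B)
      · have hne : A ≠ B := by
          rintro rfl
          exact lt_irrefl _ hlt
        have := c.la_strict A hA B hB (lt_of_le_of_ne htr hne)
        omega
    have hb : ∀ T, ρ T < t + 2 := by
      intro T
      have := c.le (tr m T)
      simp only [ρ]
      split_ifs <;> omega
    have hinj : Function.Injective
        (fun i : Fin (t + 2 + 1) => (⟨ρ (C i), hb _⟩ : Fin (t + 2))) := by
      intro i j hij
      have hij' : ρ (C i) = ρ (C j) := congrArg Fin.val hij
      rcases lt_trichotomy i j with h1 | h1 | h1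
      · have := key _ _ h1
        omega
      · exact h1
      · have := key _ _ h1
        omega
    have := Fintype.card_le_of_injective _ hinj
    simp at this
  · intro T hT hTF
    obtain ⟨B, hB, hB1, hB2⟩ := c.sm_ex (tr m T)
    obtain ⟨D, hD, hD1, hD2⟩ := c.la_ex (tr m T)
    obtain ⟨l, l1, l2, l3⟩ := c.sm_list _ B hB rfl
    have hle := c.le D
    obtain ⟨l', l1', l2', l3'⟩ := c.la_list (t - h D) D hD (by omega)
    have hlow : ∀ x ∈ l, emb m x < T := by
      intro x hx
      refine lt_of_le_of_ne ((emb_mono ((l2 x hx).2.trans hB1)).trans (emb_tr T)) ?_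
      intro he
      exact hTF ((memF T).2 (Or.inl ⟨x, (l2 x hx).1, he⟩))
    have hhigh : ∀ x ∈ l', T < emb m x ∪ Finset.Icc (m + 1) n := by
      intro x hx
      refine lt_of_le_of_ne ((sub_emb_tr hT).trans
        (Finset.union_subset_union_left (emb_mono (hD1.trans (l2' x hx).2)))) ?_
      intro he
      exact hTF ((memF T).2 (Or.inr ⟨x, (l2' x hx).1, he.symm⟩))
    refine hasChain_of_list (l.map (emb m) ++
      T :: l'.map (fun A => emb m A ∪ Finset.Icc (m + 1) n)) ?_ ?_ ?_
    · simp only [List.length_append, List.length_map, List.length_cons, l1, l1']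
      omega
    · intro x hx
      rw [List.mem_append, List.mem_cons, List.mem_map, List.mem_map] at hx
      rw [Finset.mem_insert]
      rcases hx with ⟨a, ha, rfl⟩ | hx | ⟨a, ha, rfl⟩
      · exact Or.inr ((memF _).2 (Or.inl ⟨a, (l2 a ha).1, rfl⟩))
      · exact Or.inl hx
      · exact Or.inr ((memF _).2 (Or.inr ⟨a, (l2' a ha).1, rfl⟩))
    · rw [List.pairwise_append, List.pairwise_cons, List.pairwise_map, List.pairwise_map]
      refine ⟨?_, ⟨?_, ?_⟩, ?_⟩
      · refine l3.imp ?_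
        intro a b hab
        refine lt_of_le_of_ne (emb_mono hab.le) ?_
        intro he
        have := congrArg (tr m) he
        rw [tr_emb, tr_emb] at this
        exact hab.ne this
      · intro y hy
        obtain ⟨a, ha, rfl⟩ := List.mem_map.1 hy
        exact hhigh a ha
      · refine l3'.imp ?_
        intro a b hab
        refine lt_of_le_of_ne (Finset.union_subset_union_left (emb_mono hab.le)) ?_
        intro he
        have := congrArg (tr m) he
        rw [tr_emb_union, tr_emb_union] at this
        exact hab.ne this
      · intro x hx y hy
        obtain ⟨a, ha, rfl⟩ := List.mem_map.1 hx
        rcases List.mem_cons.1 hy with rfl | hy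
        · exact hlow a ha
        · obtain ⟨b, hb, rfl⟩ := List.mem_map.1 hy
          exact (hlow a ha).trans (hhigh b hb)

theorem size_bound (j r : ℕ) (hr : r < 4) :
    ((2 * (15 ^ j * 2 ^ r) : ℕ) : ℝ) ≤
      2 ^ ((1 - (1 - Real.logb 2 15 / 4)) * ((4 * j + r + 2 : ℕ) : ℝ)) := by
  have h15 : (2 : ℝ) ^ Real.logb 2 15 = 15 :=
    Real.rpow_logb (by norm_num) (by norm_num) (by norm_num)
  have hpos : (0 : ℝ) ≤ 2 ^ ((1 - (1 - Real.logb 2 15 / 4)) * ((4 * j + r + 2 : ℕ) : ℝ)) := by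
    positivity
  refine le_of_pow_le_pow_left₀ (n := 4) (by norm_num) hpos ?_
  have hR : ((2 : ℝ) ^ ((1 - (1 - Real.logb 2 15 / 4)) * ((4 * j + r + 2 : ℕ) : ℝ))) ^ 4
      = ((15 ^ (4 * j + r + 2) : ℕ) : ℝ) := by
    rw [← Real.rpow_natCast, ← Real.rpow_mul (by norm_num)]
    rw [show (1 - (1 - Real.logb 2 15 / 4)) * ((4 * j + r + 2 : ℕ) : ℝ) * ((4 : ℕ) : ℝ)
      = Real.logb 2 15 * ((4 * j + r + 2 : ℕ) : ℝ) by push_cast; ring]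
    rw [Real.rpow_mul (by norm_num), h15, Real.rpow_natCast]
    push_cast
    rfl
  rw [hR, ← Nat.cast_pow, Nat.cast_le]
  have e1 : (2 * (15 ^ j * 2 ^ r)) ^ 4 = 15 ^ (4 * j) * (2 * 2 ^ r) ^ 4 := by
    rw [mul_comm 4 j, pow_mul]
    ring
  rw [e1, add_assoc, pow_add]
  refine Nat.mul_le_mul_left _ ?_
  interval_cases r <;> norm_num

theorem upper_bound_15 :
    ∀ k : ℕ, 6 ≤ k → ∃ n₀ : ℕ, ∀ n : ℕ, n₀ ≤ n →
      ∃ F : Finset (Finset ℕ), IsSatKSperner (Finset.Icc 1 n) F k ∧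
        (F.card : ℝ) ≤ 2 ^ ((1 - (1 - Real.logb 2 15 / 4)) * k) := by
  intro k hk
  obtain ⟨j, r, hr, rfl⟩ : ∃ j r, r < 4 ∧ k = 4 * j + r + 2 :=
    ⟨(k - 2) / 4, (k - 2) % 4, Nat.mod_lt _ (by norm_num), by omega⟩
  obtain ⟨m, h, S, L, c, hS, hL⟩ := hasCert_pow j r
  refine ⟨m + 1, fun n hn => ⟨_, c.saturated hn, ?_⟩⟩
  refine le_trans ?_ (size_bound j r hr)
  rw [Nat.cast_le]
  refine (Finset.card_union_le _ _).trans ?_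
  have h1 := Finset.card_image_le (s := S) (f := emb m)
  have h2 := Finset.card_image_le (s := L) (f := fun A => emb m A ∪ Finset.Icc (m + 1) n)
  omega
end
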